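/- Let k be a field and T an indeterminate. Then every finite embedding problem over the rational function field k(T) has a regular solution. Explicitly: let G be a finite group, L a finite separable extension of k(T), and α : G → Aut(L/k(T)) a surjective group homomorphism. Then there exist a finite separable extension E of k(T) with L ⊆ E such that every element of E that is algebraic over k lies in L (i.e., E ∩ k̄ = L ∩ k̄) and an isomorphism β : Aut(E/k(T)) → G such that every σ ∈ Aut(E/k(T)) maps L onto itself and σ|_L = α(β(σ)). -/

import Mathlib

set_option synthInstance.maxHeartbeats 1000000
set_option maxHeartbeats 1000000

section
open Polynomial
open scoped PowerSeries

lemma pw_hensel {κ : Type*} [Field κ] (P : κ⟦X⟧[X]) (hP : P.Monic) (a : κ)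
    (h0 : (P.map (PowerSeries.constantCoeff (R := κ))).eval a = 0)
    (h1 : (P.map (PowerSeries.constantCoeff (R := κ))).derivative.eval a ≠ 0) :
    ∃ r : κ⟦X⟧, P.eval r = 0 ∧ PowerSeries.constantCoeff r = a := by
  have H : HenselianRing (κ⟦X⟧) (Ideal.span {PowerSeries.X}) := inferInstance
  have hev : ∀ Q : κ⟦X⟧[X], PowerSeries.constantCoeff
      (Q.eval (PowerSeries.C a)) = (Q.map (PowerSeries.constantCoeff (R := κ))).eval a := by
    intro Q
    rw [← Polynomial.eval_map_apply]
    simp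
  obtain ⟨r, hr, hr2⟩ := H.is_henselian P hP (PowerSeries.C a)
    (by rw [Ideal.mem_span_singleton, PowerSeries.X_dvd_iff, hev, h0])
    (by
      apply IsUnit.map
      rw [PowerSeries.isUnit_iff_constantCoeff, hev, ← Polynomial.derivative_map]
      exact isUnit_iff_ne_zero.mpr h1)
  refine ⟨r, hr, ?_⟩
  rw [Ideal.mem_span_singleton, PowerSeries.X_dvd_iff, map_sub, sub_eq_zero] at hr2
  simpa using hr2

lemma pw_root_inj {κ : Type*} [Field κ] (P : κ⟦X⟧[X]) (r1 r2 : κ⟦X⟧)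
    (h1 : P.eval r1 = 0) (h2 : P.eval r2 = 0)
    (hr : PowerSeries.constantCoeff r1 = PowerSeries.constantCoeff r2)
    (hd : (P.map (PowerSeries.constantCoeff (R := κ))).derivative.eval
      (PowerSeries.constantCoeff r1) ≠ 0) : r1 = r2 := by
  obtain ⟨c, hc⟩ := Polynomial.binomExpansion P r1 (r2 - r1)
  rw [add_sub_cancel, h1, h2] at hc
  have h3 : (r2 - r1) * (P.derivative.eval r1 + c * (r2 - r1)) = 0 := by
    rw [← sub_eq_zero] at hc
    linear_combination -hc
  rcases mul_eq_zero.mp h3 with h | h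
  · exact (sub_eq_zero.mp h).symm
  · exfalso
    apply hd
    rw [Polynomial.derivative_map, Polynomial.eval_map_apply]
    have := congrArg (PowerSeries.constantCoeff (R := κ)) h
    simpa [hr] using this

lemma pw_split {κ : Type*} [Field κ] [IsAlgClosed κ] {B : Type*} [Field B] [Algebra κ⟦X⟧ B]
    (P : κ⟦X⟧[X]) (hP : P.Monic) (hs : (P.map (PowerSeries.constantCoeff (R := κ))).Separable)
    (y : B) (hy : aeval y P = 0) : ∃ r : κ⟦X⟧, P.eval r = 0 ∧ algebraMap κ⟦X⟧ B r = y := by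
  classical
  set Q := P.map (PowerSeries.constantCoeff (R := κ)) with hQ
  have hQ0 : Q ≠ 0 := (hP.map _).ne_zero
  have hex : ∀ a : κ, ∃ r : κ⟦X⟧, Q.eval a = 0 → P.eval r = 0 ∧ PowerSeries.constantCoeff r = a := by
    intro a
    by_cases h : Q.eval a = 0
    · obtain ⟨r, hr⟩ := pw_hensel P hP a h (hs.eval₂_derivative_ne_zero (RingHom.id κ) h)
      exact ⟨r, fun _ => hr⟩
    · exact ⟨0, fun h' => absurd h' h⟩
  choose r hr using hex
  have hle : Q.roots.map r ≤ P.roots := by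
    rw [Multiset.le_iff_subset]
    · intro x hx
      obtain ⟨a, ha, rfl⟩ := Multiset.mem_map.mp hx
      rw [mem_roots hQ0] at ha
      rw [mem_roots hP.ne_zero]
      exact (hr a ha).1
    · refine Multiset.Nodup.map_on ?_ (nodup_roots hs)
      intro a ha b hb hab
      rw [mem_roots hQ0] at ha hb
      rw [← (hr a ha).2, ← (hr b hb).2, hab]
  have hc : P.roots.card = P.natDegree := by
    apply le_antisymm (card_roots' _)
    have := Multiset.card_le_card hle
    rw [Multiset.card_map, IsAlgClosed.card_roots_eq_natDegree, hQ, hP.natDegree_map] at this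
    exact this
  have hprod := prod_multiset_X_sub_C_of_monic_of_roots_card_eq hP hc
  rw [← hprod, map_multiset_prod, Multiset.map_map, Multiset.prod_eq_zero_iff,
    Multiset.mem_map] at hy
  obtain ⟨a, ha, h⟩ := hy
  refine ⟨a, (mem_roots hP.ne_zero).mp ha, ?_⟩
  simp only [Function.comp, map_sub, aeval_X, aeval_C] at h
  exact (sub_eq_zero.mp h).symm

lemma pw_eisenstein {κ C B : Type*} [Field κ] [Field C] [Algebra κ⟦X⟧ C] [IsFractionRing κ⟦X⟧ C]
    [Field B] [Algebra κ⟦X⟧ B] [Algebra C B] [IsScalarTower κ⟦X⟧ C B]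
    (P : κ⟦X⟧[X]) (hP : P.Monic) (hd : 0 < P.natDegree)
    (hc : ∀ i < P.natDegree, PowerSeries.constantCoeff (P.coeff i) = 0)
    (h0 : ¬ (PowerSeries.X ^ 2 ∣ P.coeff 0))
    (y : B) (hy : aeval y P = 0) : (minpoly C y).natDegree = P.natDegree := by
  have hE : P.IsEisensteinAt (Ideal.span {(PowerSeries.X : κ⟦X⟧)}) := by
    refine ⟨?_, ?_, ?_⟩
    · rw [hP.leadingCoeff, Ideal.mem_span_singleton, PowerSeries.X_dvd_iff]; simp
    · intro i hi
      rw [Ideal.mem_span_singleton, PowerSeries.X_dvd_iff]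
      exact hc _ hi
    · rw [Ideal.span_singleton_pow, Ideal.mem_span_singleton]
      exact h0
  have hpr : (Ideal.span {(PowerSeries.X : κ⟦X⟧)}).IsPrime := PowerSeries.span_X_isPrime
  have hirr := hE.irreducible hpr hP.isPrimitive hd
  rw [hP.irreducible_iff_irreducible_map_fraction_map (K := C)] at hirr
  have := minpoly.eq_of_irreducible_of_monic (x := y) hirr (by
    rw [aeval_map_algebraMap]; exact hy) (hP.map _)
  rw [← this, hP.natDegree_map]

/-- no roots -/
lemma pw_noroot {κ C : Type*} [Field κ] [Field C] [Algebra κ⟦X⟧ C] [IsFractionRing κ⟦X⟧ C]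
    (a u : κ⟦X⟧) (n : ℕ) (ha : PowerSeries.constantCoeff a = 0) (ha' : ¬ PowerSeries.X ^ (n + 1) ∣ a)
    (hu : PowerSeries.constantCoeff u ≠ 0) (V : C)
    (hV : algebraMap κ⟦X⟧ C a * (V ^ n * (V + 1)) = algebraMap κ⟦X⟧ C u) : False := by
  have hinj := IsFractionRing.injective κ⟦X⟧ C
  rcases ValuationRing.isInteger_or_isInteger κ⟦X⟧ V with ⟨v, hv⟩ | ⟨z, hz⟩
  · rw [← hv, ← map_one (algebraMap κ⟦X⟧ C), ← map_add, ← map_pow, ← map_mul, ← map_mul] at hV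
    have := congrArg (PowerSeries.constantCoeff (R := κ)) (hinj hV)
    rw [map_mul, ha, zero_mul] at this
    exact hu this.symm
  · have hV0 : V ≠ 0 := by
      rintro rfl
      rcases n with _ | n
      · have h2 : algebraMap κ⟦X⟧ C a = algebraMap κ⟦X⟧ C u := by simpa using hV
        have := hinj h2
        rw [this] at ha
        exact hu ha
      · have h2 : algebraMap κ⟦X⟧ C 0 = algebraMap κ⟦X⟧ C u := by simpa using hV
        have := hinj h2
        rw [← this] at hu
        simp at hu
    have h1 : a * (1 + z) = u * z ^ (n + 1) := by
      apply hinj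
      rw [map_mul, map_mul, map_add, map_pow, map_one, ← hV, hz, inv_pow]
      field_simp
      ring
    have hz0 : PowerSeries.constantCoeff z = 0 := by
      have := congrArg (PowerSeries.constantCoeff (R := κ)) h1
      rw [map_mul, ha, zero_mul, map_mul, map_pow] at this
      rcases mul_eq_zero.mp this.symm with h | h
      · exact absurd h hu
      · exact pow_eq_zero_iff (by omega) |>.mp h
    have hun : IsUnit (1 + z) := by
      rw [PowerSeries.isUnit_iff_constantCoeff]; simp [hz0]
    apply ha'
    have : PowerSeries.X ^ (n + 1) ∣ a * (1 + z) := by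
      rw [h1]
      exact Dvd.dvd.mul_left (pow_dvd_pow_of_dvd (PowerSeries.X_dvd_iff.mpr hz0) _) _
    exact (hun.dvd_mul_right).mp this

/-- exactly one root -/
lemma pw_oneroot {κ C : Type*} [Field κ] [Field C] [Algebra κ⟦X⟧ C] [IsFractionRing κ⟦X⟧ C]
    (a e : κ⟦X⟧) (r : ℕ) (hr : 1 ≤ r) (ha : PowerSeries.X ^ r ∣ a)
    (ha' : ¬ PowerSeries.X ^ (r + 1) ∣ a)
    (he : PowerSeries.constantCoeff e = 0) (he0 : e ≠ 0) :
    ∃ V : C, algebraMap κ⟦X⟧ C a * (V ^ (r + 1) * (V + 1)) = algebraMap κ⟦X⟧ C (e ^ (r + 1)) ∧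
      ∀ V' : C, algebraMap κ⟦X⟧ C a * (V' ^ (r + 1) * (V' + 1)) = algebraMap κ⟦X⟧ C (e ^ (r + 1)) →
        V' = V := by
  have hinj := IsFractionRing.injective κ⟦X⟧ C
  obtain ⟨u, rfl⟩ := ha
  obtain ⟨f, rfl⟩ := PowerSeries.X_dvd_iff.mpr he
  have hu : PowerSeries.constantCoeff u ≠ 0 := by
    intro h
    obtain ⟨u', rfl⟩ := PowerSeries.X_dvd_iff.mpr h
    exact ha' ⟨u', by ring⟩
  have hf0 : f ≠ 0 := right_ne_zero_of_mul he0
  have hun : IsUnit u := by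
    rw [PowerSeries.isUnit_iff_constantCoeff]; exact isUnit_iff_ne_zero.mpr hu
  obtain ⟨w, hw⟩ := hun.exists_right_inv
  have hX0 : (PowerSeries.X : κ⟦X⟧) ≠ 0 := PowerSeries.X_ne_zero
  set c : κ⟦X⟧ := PowerSeries.X * f ^ (r + 1) * w with hc
  have hiff : ∀ v : κ⟦X⟧, (PowerSeries.X ^ r * u) * (v ^ (r + 1) * (v + 1)) =
      (PowerSeries.X * f) ^ (r + 1) ↔ v ^ (r + 1) * (v + 1) = c := by
    intro v
    constructor
    · intro h
      have : PowerSeries.X ^ r * (u * (v ^ (r + 1) * (v + 1)) - PowerSeries.X * f ^ (r + 1)) = 0 := by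
        linear_combination h
      have := (mul_eq_zero.mp this).resolve_left (pow_ne_zero _ hX0)
      rw [hc]
      linear_combination w * this - (v ^ (r + 1) * (v + 1)) * hw
    · intro h
      rw [mul_assoc, h, hc]
      linear_combination PowerSeries.X ^ (r+1) * f ^ (r + 1) * hw
  set P : κ⟦X⟧[X] := Polynomial.X ^ (r + 2) + (Polynomial.X ^ (r + 1) - Polynomial.C c) with hPdef
  have hPm : P.Monic := by
    apply monic_X_pow_add
    apply lt_of_le_of_lt (degree_sub_le _ _)
    rw [degree_X_pow]
    apply max_lt
    · exact_mod_cast (by omega)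
    · exact lt_of_le_of_lt degree_C_le (by exact_mod_cast (by omega))
  have hPe : ∀ v, P.eval v = 0 ↔ v ^ (r + 1) * (v + 1) = c := by
    intro v
    rw [hPdef]
    simp only [eval_add, eval_pow, eval_X, eval_sub, eval_C]
    constructor
    · intro h; linear_combination h
    · intro h; linear_combination h
  have hc0 : PowerSeries.constantCoeff c = 0 := by simp [hc]
  have hPmap : P.map (PowerSeries.constantCoeff (R := κ)) = Polynomial.X ^ (r + 2) + Polynomial.X ^ (r + 1) := by
    simp [hPdef, hc0]
  have hder : (P.map (PowerSeries.constantCoeff (R := κ))).derivative.eval (-1) ≠ 0 := by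
    rw [hPmap]
    have : (derivative (Polynomial.X ^ (r + 2) + Polynomial.X ^ (r + 1) : κ[X])).eval (-1)
        = -(-1) ^ r := by
      simp
      ring
    rw [this]
    simp
  obtain ⟨v, hv, hv1⟩ := pw_hensel P hPm (-1) (by rw [hPmap]; simp; ring) hder
  refine ⟨algebraMap _ C v, ?_, ?_⟩
  · rw [← (hiff v).mpr ((hPe v).mp hv)]
    simp
  · intro V' hV'
    have hint : IsIntegral κ⟦X⟧ V' := by
      refine ⟨P, hPm, ?_⟩
      have h1 : algebraMap κ⟦X⟧ C (PowerSeries.X ^ r * u) ≠ 0 := by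
        rw [Ne, map_eq_zero_iff _ hinj]
        exact mul_ne_zero (pow_ne_zero _ hX0) hun.ne_zero
      have h2 : algebraMap κ⟦X⟧ C (PowerSeries.X ^ r * u) * (V' ^ (r + 1) * (V' + 1)) =
        algebraMap κ⟦X⟧ C (PowerSeries.X ^ r * u) * algebraMap κ⟦X⟧ C c := by
        rw [hV', ← map_mul]
        congr 1
        rw [hc]
        linear_combination (-PowerSeries.X ^ (r+1) * f ^ (r + 1)) * hw
      have h3 := mul_left_cancel₀ h1 h2
      rw [hPdef]
      simp only [eval₂_add, eval₂_pow, eval₂_X, eval₂_sub, eval₂_C]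
      linear_combination h3
    obtain ⟨z, rfl⟩ := IsIntegrallyClosed.isIntegral_iff.mp hint
    congr 1
    have hz : z ^ (r + 1) * (z + 1) = c := by
      rw [← hiff]
      apply hinj
      rw [← hV']
      simp
    have hz2 := congrArg (PowerSeries.constantCoeff (R := κ)) hz
    rw [hc0, map_mul, map_pow, map_add, map_one] at hz2
    have hz3 : PowerSeries.constantCoeff z = -1 := by
      rcases mul_eq_zero.mp hz2 with h | h
      · exfalso
        have hz0 := pow_eq_zero_iff (by omega) |>.mp h
        have hord := congrArg PowerSeries.order ((hiff z).mpr hz)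
        have hz1 : IsUnit (z + 1) := by
          rw [PowerSeries.isUnit_iff_constantCoeff]; simp [hz0]
        have ord0 : ∀ x : κ⟦X⟧, IsUnit x → x.order = 0 := by
          intro x hx
          exact PowerSeries.order_zero_of_unit hx
        simp only [PowerSeries.order_mul, PowerSeries.order_pow, ord0 _ hun, ord0 _ hz1,
          PowerSeries.order_X] at hord
        have hfo : f.order ≠ ⊤ := by simpa [PowerSeries.order_eq_top] using hf0
        obtain ⟨m, hm⟩ := ENat.ne_top_iff_exists.mp hfo
        by_cases hzt : z.order = ⊤
        · rw [hzt, ← hm] at hord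
          have : (r + 1) • (⊤ : ℕ∞) = ⊤ := by simp
          rw [this] at hord
          simp at hord
          norm_cast at hord
        · obtain ⟨m', hm'⟩ := ENat.ne_top_iff_exists.mp hzt
          rw [← hm, ← hm'] at hord
          simp only [nsmul_eq_mul] at hord
          norm_cast at hord
          simp at hord
          have h4 : (r + 1) ∣ r := by
            have h5 : (r + 1) ∣ r + (r + 1) * m' := by rw [hord]; exact dvd_mul_right _ _
            exact (Nat.dvd_add_left (dvd_mul_right _ _)).mp h5
          have := Nat.le_of_dvd (by omega) h4
          omega
      · linear_combination h
    refine pw_root_inj P z v ((hPe z).mpr hz) hv (by rw [hz3, hv1]) ?_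
    rw [hz3]; exact hder
end

section
open Polynomial
open scoped PowerSeries

noncomputable def pl_phi (k : Type*) {κ : Type*} [Field k] [Field κ] [Algebra k κ] (t : κ) :
    k[X] →+* κ⟦X⟧ :=
  (Polynomial.coeToPowerSeries.ringHom (R := κ)).comp
    (((taylorAlgHom t : κ[X] →ₐ[κ] κ[X]) : κ[X] →+* κ[X]).comp (mapRingHom (algebraMap k κ)))

variable {k κ : Type*} [Field k] [Field κ] [Algebra k κ]

lemma pl_phi_apply (t : κ) (p : k[X]) :
    pl_phi k t p = ((taylor t (p.map (algebraMap k κ)) : κ[X]) : κ⟦X⟧) := rfl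

lemma pl_phi_inj (t : κ) : Function.Injective (pl_phi k t) := by
  intro p q h
  rw [pl_phi_apply, pl_phi_apply] at h
  exact map_injective _ (algebraMap k κ).injective (taylor_injective t (Polynomial.coe_injective κ h))

lemma pl_phi_ev (t : κ) (p : k[X]) :
    PowerSeries.constantCoeff (pl_phi k t p) = aeval t p := by
  rw [pl_phi_apply, ← PowerSeries.coeff_zero_eq_constantCoeff_apply, Polynomial.coeff_coe,
    taylor_coeff_zero, eval_map_algebraMap]

lemma pl_phi_one (t : κ) (p : k[X]) :
    PowerSeries.coeff 1 (pl_phi k t p) = aeval t (derivative p) := by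
  rw [pl_phi_apply, Polynomial.coeff_coe,
    taylor_coeff_one, derivative_map, eval_map_algebraMap]

lemma pl_phi_simple (t : κ) (p : k[X]) (h : aeval t (derivative p) ≠ 0) :
    ¬ (PowerSeries.X : κ⟦X⟧) ^ 2 ∣ pl_phi k t p := by
  intro h2
  rw [PowerSeries.X_pow_dvd_iff] at h2
  exact h (by rw [← pl_phi_one]; exact h2 1 (by norm_num))

lemma pl_phi_C (t : κ) (c : k) : pl_phi k t (C c) = PowerSeries.C (algebraMap k κ c) := by
  rw [pl_phi_apply]; simp

lemma ps_order (a : κ⟦X⟧) (h0 : a ≠ 0) (ha : PowerSeries.constantCoeff a = 0) :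
    ∃ r, 1 ≤ r ∧ (PowerSeries.X : κ⟦X⟧) ^ r ∣ a ∧ ¬ (PowerSeries.X : κ⟦X⟧) ^ (r+1) ∣ a := by
  have hf : FiniteMultiplicity (PowerSeries.X : κ⟦X⟧) a :=
    FiniteMultiplicity.of_not_isUnit PowerSeries.X_prime.not_isUnit h0
  refine ⟨multiplicity PowerSeries.X a, ?_, pow_multiplicity_dvd _ _, ?_⟩
  · rw [← hf.pow_dvd_iff_le_multiplicity, pow_one]
    exact PowerSeries.X_dvd_iff.2 ha
  · exact hf.not_pow_dvd_of_multiplicity_lt (Nat.lt_succ_self _)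

variable {K A C B : Type*} [Field K] [Field A] [Field C] [Field B]
  [Algebra k[X] K] [IsFractionRing k[X] K] [Algebra K A]
  [Algebra κ⟦X⟧ C] [IsFractionRing κ⟦X⟧ C] [Algebra C B] [Algebra κ⟦X⟧ B] [IsScalarTower κ⟦X⟧ C B]

def IsPl (k K : Type*) {κ A B : Type*} [Field k] [Field κ] [Algebra k κ] [Field K] [Field A] [Field B]
    [Algebra k[X] K] [Algebra K A] [Algebra κ⟦X⟧ B] (t : κ) (ι : A →+* B) : Prop :=
  ∀ p : k[X], ι (algebraMap K A (algebraMap k[X] K p)) = algebraMap κ⟦X⟧ B (pl_phi k t p)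

lemma OB_inj (C : Type*) {B : Type*} [Field C] [Field B] [Algebra κ⟦X⟧ C] [IsFractionRing κ⟦X⟧ C]
    [Algebra C B] [Algebra κ⟦X⟧ B] [IsScalarTower κ⟦X⟧ C B] :
    Function.Injective (algebraMap κ⟦X⟧ B) := by
  rw [IsScalarTower.algebraMap_eq κ⟦X⟧ C B]
  exact (algebraMap C B).injective.comp (IsFractionRing.injective κ⟦X⟧ C)

lemma pl_exists (k K A C B : Type*) [Field k] [Algebra k κ] [Field K] [Field A] [Field C] [Field B]
    [Algebra k[X] K] [IsFractionRing k[X] K] [Algebra K A] [Algebra.IsAlgebraic K A]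
    [Algebra κ⟦X⟧ C] [IsFractionRing κ⟦X⟧ C] [Algebra C B] [Algebra κ⟦X⟧ B] [IsScalarTower κ⟦X⟧ C B]
    [IsAlgClosed B] (t : κ) : ∃ ι : A →+* B, IsPl k K t ι := by
  let j : K →+* B := IsFractionRing.lift (A := k[X]) (g := (algebraMap κ⟦X⟧ B).comp (pl_phi k t))
    ((OB_inj C).comp (pl_phi_inj t))
  letI : Algebra K B := j.toAlgebra
  refine ⟨(IsAlgClosed.lift : A →ₐ[K] B), fun p => ?_⟩
  have : (IsAlgClosed.lift : A →ₐ[K] B) (algebraMap K A (algebraMap k[X] K p)) =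
    j (algebraMap k[X] K p) := AlgHom.commutes _ _
  refine this.trans ?_
  simp [j]

lemma IsPl.comp {t : κ} {ι : A →+* B} (h : IsPl k K t ι) (τ : A ≃ₐ[K] A) :
    IsPl k K t (ι.comp (τ : A →+* A)) := by
  intro p
  rw [← h p]
  simp

noncomputable def pl_field (C : Type*) [Field C] [Algebra κ⟦X⟧ C] [IsFractionRing κ⟦X⟧ C] [Algebra C B]
  [IsScalarTower κ⟦X⟧ C B] {t : κ} {ι : A →+* B} (h : IsPl k K t ι) : IntermediateField K A :=
  ((algebraMap C B).fieldRange.comap ι).toIntermediateField (by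
    intro x
    obtain ⟨p, q, hq, rfl⟩ := IsFractionRing.div_surjective (A := k[X]) x
    simp only [Subfield.mem_comap, RingHom.mem_fieldRange]
    refine ⟨algebraMap κ⟦X⟧ C (pl_phi k t p) / algebraMap κ⟦X⟧ C (pl_phi k t q), ?_⟩
    rw [map_div₀, map_div₀, map_div₀, h, h, ← IsScalarTower.algebraMap_apply,
      ← IsScalarTower.algebraMap_apply])

lemma mem_pl_field {t : κ} {ι : A →+* B} (h : IsPl k K t ι) (x : A) :
    x ∈ pl_field C h ↔ ∃ c, algebraMap C B c = ι x := Iff.rfl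

lemma pl_alg [IsAlgClosed κ] [Algebra k K] [IsScalarTower k k[X] K] [Algebra k A] [IsScalarTower k K A]
    {t : κ} {ι : A →+* B} (h : IsPl k K t ι) (x : A) (hx : IsAlgebraic k x) :
    x ∈ pl_field C h := by
  obtain ⟨p, hp, hpx⟩ := hx
  rw [mem_pl_field]
  have key : ∀ c : k, ι (algebraMap k A c) = 
      (algebraMap κ⟦X⟧ B) (PowerSeries.C (algebraMap k κ c)) := by
    intro c
    rw [← pl_phi_C t, ← h, IsScalarTower.algebraMap_apply k K A, IsScalarTower.algebraMap_apply k k[X] K]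
    rfl
  have hc : ι.comp (algebraMap k A) = ((algebraMap κ⟦X⟧ B).comp PowerSeries.C).comp (algebraMap k κ) := 
    RingHom.ext key
  have hs : (p.map (algebraMap k κ)).Splits := IsAlgClosed.splits _
  have := hs.mem_range_of_isRoot ((Polynomial.map_ne_zero_iff (algebraMap k κ).injective).2 hp) 
    (i := (algebraMap κ⟦X⟧ B).comp PowerSeries.C) (x := ι x) (by
      rw [map_map, ← hc, IsRoot, eval_map, ← hom_eval₂, ← aeval_def, hpx, map_zero])
  obtain ⟨c, hc⟩ := this
  refine ⟨algebraMap κ⟦X⟧ C (PowerSeries.C c), ?_⟩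
  rw [← hc, ← IsScalarTower.algebraMap_apply]
  rfl

lemma pl_hom {t : κ} {ι : A →+* B} (h : IsPl k K t ι) (Λ : IntermediateField K A) 
    (hΛ : Λ ≤ pl_field C h) : ∃ j : Λ →+* C, ∀ a, algebraMap C B (j a) = ι a := by
  have H : ∀ a : Λ, ∃ c, algebraMap C B c = ι a := fun a => (mem_pl_field h _).1 (hΛ a.2)
  choose f hf using H
  have inj := (algebraMap C B).injective
  exact ⟨{ toFun := f
           map_one' := inj (by simp [hf])
           map_zero' := inj (by simp [hf])
           map_add' := fun a b => inj (by simp [hf])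
           map_mul' := fun a b => inj (by simp [hf]) }, hf⟩

lemma pl_deg {t : κ} {ι : A →+* B} (h : IsPl k K t ι) (Λ : IntermediateField K A) 
    (hΛ : Λ ≤ pl_field C h) (x : A) (hx : IsIntegral Λ x) : 
    (minpoly C (ι x)).natDegree ≤ (minpoly Λ x).natDegree := by
  obtain ⟨j, hj⟩ := pl_hom h Λ hΛ
  have hm : ((minpoly Λ x).map j).Monic := (minpoly.monic hx).map _
  rw [← (minpoly.monic hx).natDegree_map j]
  apply natDegree_le_of_dvd _ hm.ne_zero
  apply minpoly.dvd
  have hc : (algebraMap C B).comp j = ι.comp (algebraMap Λ A) := RingHom.ext hj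
  rw [aeval_def, eval₂_map, hc, ← hom_eval₂, ← aeval_def, minpoly.aeval, map_zero]

lemma pl_int (κ A C B : Type*) [Field κ] [Algebra k κ] [Field A] [Algebra K A] [Field C] [Field B] 
    [Algebra κ⟦X⟧ C] [IsFractionRing κ⟦X⟧ C] [Algebra C B] [Algebra κ⟦X⟧ B] [IsScalarTower κ⟦X⟧ C B]
    (x : K) : ∃ S : Finset κ, ∀ t ∉ S, ∀ ι : A →+* B, IsPl k K t ι → 
      ∃ r, algebraMap κ⟦X⟧ B r = ι (algebraMap K A x) := by
  classical
  obtain ⟨p, q, hq, rfl⟩ := IsFractionRing.div_surjective (A := k[X]) x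
  refine ⟨(q.map (algebraMap k κ)).roots.toFinset, fun t ht ι h => ?_⟩
  have hq0 : q ≠ 0 := nonZeroDivisors.ne_zero hq
  have ht' : aeval t q ≠ 0 := by
    intro h0
    apply ht
    rw [Multiset.mem_toFinset, mem_roots ((Polynomial.map_ne_zero_iff (algebraMap k κ).injective).2 hq0),
      IsRoot, eval_map_algebraMap, h0]
  rw [← pl_phi_ev] at ht'
  have hu : IsUnit (pl_phi k t q) := PowerSeries.isUnit_iff_constantCoeff.2 ht'.isUnit
  obtain ⟨v, hv⟩ := hu.exists_right_inv
  refine ⟨pl_phi k t p * v, ?_⟩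
  rw [map_div₀, map_div₀, h, h, map_mul, eq_div_iff, mul_assoc, ← map_mul, ← map_mul, mul_comm v, hv, mul_one]
  rw [Ne, map_eq_zero_iff _ (OB_inj C)]
  exact hu.ne_zero

lemma pl_int_poly (κ A C B : Type*) [Field κ] [Algebra k κ] [Field A] [Algebra K A] [Field C] [Field B] 
    [Algebra κ⟦X⟧ C] [IsFractionRing κ⟦X⟧ C] [Algebra C B] [Algebra κ⟦X⟧ B] [IsScalarTower κ⟦X⟧ C B]
    (P : K[X]) : ∃ S : Finset κ, ∀ t ∉ S, ∀ ι : A →+* B, IsPl k K t ι → 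
      ∃ Q : κ⟦X⟧[X], Q.map (algebraMap κ⟦X⟧ B) = P.map (ι.comp (algebraMap K A)) := by
  classical
  choose S hS using fun x : K => pl_int (k := k) κ A C B x
  refine ⟨P.support.biUnion fun i => S (P.coeff i), fun t ht ι h => ?_⟩
  rw [Finset.mem_biUnion] at ht
  push Not at ht
  have : P.map (ι.comp (algebraMap K A)) ∈ lifts (algebraMap κ⟦X⟧ B) := by
    rw [lifts_iff_coeff_lifts]
    intro i
    rw [coeff_map]
    by_cases hi : i ∈ P.support
    · obtain ⟨r, hr⟩ := hS _ t (ht i hi) ι h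
      exact ⟨r, hr⟩
    · rw [notMem_support_iff.1 hi, map_zero]
      exact ⟨0, map_zero _⟩
  rw [mem_lifts] at this
  exact this

lemma pl_good (κ C B : Type*) [Field κ] [Algebra k κ] [IsAlgClosed κ] [Field C] [Field B] 
    [Algebra κ⟦X⟧ C] [IsFractionRing κ⟦X⟧ C] [Algebra C B] [Algebra κ⟦X⟧ B] [IsScalarTower κ⟦X⟧ C B]
    (P : K[X]) (hP : P.Monic) (hs : P.Separable) : 
    ∃ S : Finset κ, ∀ t ∉ S, ∀ ι : A →+* B, IsPl k K t ι → 
      (∀ θ : A, aeval θ P = 0 → ∃ r, algebraMap κ⟦X⟧ B r = ι θ) ∧ 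
      ∀ θ θ' : A, aeval θ P = 0 → aeval θ' P = 0 → ∀ r r', algebraMap κ⟦X⟧ B r = ι θ →
        algebraMap κ⟦X⟧ B r' = ι θ' → PowerSeries.constantCoeff r = PowerSeries.constantCoeff r' → 
          θ = θ' := by
  classical
  obtain ⟨u, v, huv⟩ := hs
  obtain ⟨S1, h1⟩ := pl_int_poly (k := k) κ A C B P
  obtain ⟨S2, h2⟩ := pl_int_poly (k := k) κ A C B u
  obtain ⟨S3, h3⟩ := pl_int_poly (k := k) κ A C B v
  refine ⟨S1 ∪ S2 ∪ S3, fun t ht ι h => ?_⟩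
  simp only [Finset.mem_union, not_or] at ht
  obtain ⟨Q, hQ⟩ := h1 t ht.1.1 ι h
  obtain ⟨U, hU⟩ := h2 t ht.1.2 ι h
  obtain ⟨V, hV⟩ := h3 t ht.2 ι h
  have inj := OB_inj (κ := κ) C (B := B)
  have hQm : Q.Monic := by
    rw [inj.monic_map_iff, hQ]; exact hP.map _
  have hsep : U * Q + V * derivative Q = 1 := by
    apply map_injective _ inj
    rw [Polynomial.map_add, Polynomial.map_mul, Polynomial.map_mul, ← derivative_map, hQ, hU, hV,
      derivative_map, ← Polynomial.map_mul, ← Polynomial.map_mul, ← Polynomial.map_add, huv,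
      Polynomial.map_one, Polynomial.map_one]
  have hQs : (Q.map (PowerSeries.constantCoeff (R := κ))).Separable := 
    Polynomial.Separable.map ⟨U, V, hsep⟩
  have root : ∀ θ : A, aeval θ P = 0 → aeval (ι θ) Q = 0 := by
    intro θ hθ
    rw [aeval_def, ← eval_map, hQ, eval_map, ← hom_eval₂, ← aeval_def, hθ, map_zero]
  have root2 : ∀ θ : A, aeval θ P = 0 → ∀ r, algebraMap κ⟦X⟧ B r = ι θ → Q.eval r = 0 := by
    intro θ hθ r hr
    apply inj
    rw [map_zero, ← root θ hθ, ← hr, aeval_algebraMap_apply, coe_aeval_eq_eval]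
  constructor
  · intro θ hθ
    obtain ⟨r, -, hr⟩ := pw_split Q hQm hQs (ι θ) (root θ hθ)
    exact ⟨r, hr⟩
  · intro θ θ' hθ hθ' r r' hr hr' he
    have : r = r' := by
      apply pw_root_inj Q r r' (root2 θ hθ r hr) (root2 θ' hθ' r' hr') he
      have := hQs.eval₂_derivative_ne_zero (RingHom.id κ) (x := PowerSeries.constantCoeff r) (by
        have := congrArg (PowerSeries.constantCoeff (R := κ)) (root2 θ hθ r hr)
        rw [map_zero, ← Polynomial.eval_map_apply] at this
        exact this)
      exact this
    apply ι.injective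
    rw [← hr, ← hr', this]

lemma pl_goodfield (κ C B : Type*) [Field κ] [Algebra k κ] [IsAlgClosed κ] [Field C] [Field B] 
    [Algebra κ⟦X⟧ C] [IsFractionRing κ⟦X⟧ C] [Algebra C B] [Algebra κ⟦X⟧ B] [IsScalarTower κ⟦X⟧ C B]
    (E : IntermediateField K A) [FiniteDimensional K E] [Algebra.IsSeparable K E] :
    ∃ S : Finset κ, ∀ t ∉ S, ∀ ι : A →+* B, ∀ h : IsPl k K t ι, E ≤ pl_field C h := by
  obtain ⟨θ, hθ⟩ := Field.exists_primitive_element K E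
  have hs : (minpoly K (θ : A)).Separable := by
    have := Algebra.IsSeparable.isSeparable K θ
    rw [IsSeparable] at this
    rwa [← minpoly.algebraMap_eq (algebraMap E A).injective θ] at this
  have hint : IsIntegral K (θ : A) := (Algebra.IsIntegral.isIntegral (R := K) θ).map E.val
  obtain ⟨S, hS⟩ := pl_good (k := k) (A := A) κ C B _ (minpoly.monic hint) hs
  refine ⟨S, fun t ht ι h => ?_⟩
  have hE : E = IntermediateField.adjoin K {(θ : A)} := by
    have := congrArg IntermediateField.lift hθ
    rw [IntermediateField.lift_adjoin_simple, IntermediateField.lift_top] at this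
    exact this.symm
  rw [hE, IntermediateField.adjoin_le_iff, Set.singleton_subset_iff]
  obtain ⟨r, hr⟩ := (hS t ht ι h).1 θ (minpoly.aeval _ _)
  exact (mem_pl_field h _).2 ⟨algebraMap κ⟦X⟧ C r, by rw [← hr, ← IsScalarTower.algebraMap_apply]⟩

/-- roots of unity of large prime order avoiding a finite set -/
lemma rou_exists (k : Type*) {κ : Type*} [Field k] [Field κ] [Algebra k κ] [IsAlgClosed κ] (S : Finset κ) (N : ℕ) :
    ∃ q : ℕ, q.Prime ∧ N < q ∧ ∃ t : κ, t ∉ S ∧ t ≠ 1 ∧ aeval t (X ^ q - 1 : k[X]) = 0 ∧ 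
      aeval t (derivative (X ^ q - 1 : k[X])) ≠ 0 := by
  classical
  obtain ⟨q, hq, hp⟩ := Nat.exists_infinite_primes (N + ringChar κ + S.card + 2)
  have hq0 : (q : κ) ≠ 0 := by
    intro h
    rw [ringChar.spec] at h
    rcases (Nat.dvd_prime hp).1 h with h | h
    · have := CharP.ringChar_ne_one (R := κ)
      exact this h
    · omega
  refine ⟨q, hp, by omega, ?_⟩
  haveI : NeZero (q : κ) := ⟨hq0⟩
  have hcard : (nthRootsFinset q (1 : κ)).card = q := by
    obtain ⟨ζ, hζ⟩ := HasEnoughRootsOfUnity.prim (M := κ) (n := q)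
    exact hζ.card_nthRootsFinset
  obtain ⟨t, ht, htS⟩ := Finset.exists_mem_notMem_of_card_lt_card (s := insert 1 S)
    (t := nthRootsFinset q (1 : κ)) (by
      rw [hcard]; have := Finset.card_insert_le (1 : κ) S; omega)
  rw [mem_nthRootsFinset hp.pos] at ht
  rw [Finset.mem_insert, not_or] at htS
  refine ⟨t, htS.2, htS.1, by simp [ht], ?_⟩
  simp only [derivative_sub, derivative_X_pow, derivative_one, sub_zero, map_mul, map_pow, aeval_X,
    map_natCast]
  refine mul_ne_zero hq0 (pow_ne_zero _ ?_)
  rintro rfl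
  rw [zero_pow hp.ne_zero] at ht
  exact zero_ne_one ht

end

section
open Polynomial
open scoped PowerSeries

lemma fixed_mem {K A : Type*} [Field K] [Field A] [Algebra K A] [Normal K A] 
    (x : A) (hx : IsSeparable K x) (h : ∀ σ : A ≃ₐ[K] A, σ x = x) : x ∈ (algebraMap K A).range := by
  by_contra hn
  have hn' : x ∉ (⊥ : Subalgebra K A) := fun hh => hn (by
    obtain ⟨y, hy⟩ := Algebra.mem_bot.1 hh; exact ⟨y, hy⟩)
  obtain ⟨y, hy, hc⟩ := (notMem_iff_exists_ne_and_isConjRoot hx (Normal.splits inferInstance x)).1 hn'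
  obtain ⟨σ, hσ⟩ := isConjRoot_iff_exists_algEquiv.1 hc
  apply hy
  apply σ.injective
  rw [h σ, hσ]

lemma agree_adjoin {K A A' : Type*} [Field K] [Field A] [Field A'] [Algebra K A] [Algebra K A'] (s : Set A) 
    (σ τ : A →ₐ[K] A') (h : ∀ x ∈ s, σ x = τ x) :
    ∀ x ∈ IntermediateField.adjoin K s, σ x = τ x := by
  intro x hx
  induction hx using IntermediateField.adjoin_induction with
  | mem x hx => exact h x hx
  | algebraMap x => simp
  | add x y _ _ hx hy => rw [map_add, map_add, hx, hy]
  | inv x _ hx => rw [map_inv₀, map_inv₀, hx]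
  | mul x y _ _ hx hy => rw [map_mul, map_mul, hx, hy]

lemma hom_builder {K A : Type*} [Field K] [Field A] [Algebra K A] {G : Type*} [Group G] (s : Set A)
    (τ : G → A ≃ₐ[K] A) (h1 : ∀ g, ∀ x ∈ s, τ g x ∈ IntermediateField.adjoin K s)
    (h2 : ∀ g h, ∀ x ∈ s, τ (g * h) x = τ g (τ h x)) :
    ∃ Φ : G →* (IntermediateField.adjoin K s ≃ₐ[K] IntermediateField.adjoin K s),
      ∀ g x, ((Φ g x : IntermediateField.adjoin K s) : A) = τ g x := by
  set E := IntermediateField.adjoin K s with hE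
  have h1' : ∀ g, ∀ x ∈ E, τ g x ∈ E := by
    intro g x hx
    have : E ≤ E.comap (τ g : A →ₐ[K] A) := by
      rw [hE, IntermediateField.adjoin_le_iff]
      exact h1 g
    exact this hx
  have h2' : ∀ g h, ∀ x ∈ E, τ (g * h) x = τ g (τ h x) := by
    intro g h
    exact agree_adjoin s (τ (g * h) : A →ₐ[K] A) ((τ g : A →ₐ[K] A).comp (τ h : A →ₐ[K] A)) (h2 g h)
  have h3 : ∀ x ∈ E, τ 1 x = x := by
    intro x hx
    apply (τ 1).injective
    rw [← h2' 1 1 x hx, mul_one]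
  let f : G →* (E →ₐ[K] E) := 
    { toFun := fun g => ((τ g : A →ₐ[K] A).comp E.val).codRestrict E.toSubalgebra (fun x => h1' g x x.2)
      map_one' := by
        ext x
        exact h3 x x.2
      map_mul' := by
        intro g h
        ext x
        exact h2' g h x x.2 }
  refine ⟨(AlgEquiv.algHomUnitsEquiv K E).toMonoidHom.comp f.toHomUnits, fun g x => rfl⟩

lemma pl_restrict {k κ K A C B : Type*} [Field k] [Field κ] [Algebra k κ] [Field K] [Field A] [Field C] [Field B]
    [Algebra k[X] K] [IsFractionRing k[X] K] [Algebra K A] [Normal K A]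
    [Algebra κ⟦X⟧ C] [IsFractionRing κ⟦X⟧ C] [Algebra C B] [Algebra κ⟦X⟧ B] [IsScalarTower κ⟦X⟧ C B]
    {t : κ} {ι : A →+* B} (h : IsPl k K t ι) (σ : B ≃ₐ[C] B) : 
    ∃ σ' : A ≃ₐ[K] A, ∀ x, ι (σ' x) = σ (ι x) := by
  let _ : Algebra A B := ι.toAlgebra
  let _ : Algebra K B := (ι.comp (algebraMap K A)).toAlgebra
  have : IsScalarTower K A B := IsScalarTower.of_algebraMap_eq fun x => rfl
  let σ1 : B ≃ₐ[K] B := AlgEquiv.ofRingEquiv (f := (σ : B ≃+* B)) (by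
    intro x
    obtain ⟨c, hc⟩ := (mem_pl_field (C := C) h _).1 ((pl_field C h).algebraMap_mem x)
    change σ (ι (algebraMap K A x)) = ι (algebraMap K A x)
    rw [← hc, σ.commutes])
  exact ⟨σ1.restrictNormal A, fun x => σ1.restrictNormal_commutes A x⟩

lemma sym_lemma {K A : Type*} [Field K] [Field A] [Algebra K A] [Normal K A] (R : Finset A) 
    (hp : R.card.Prime) (hR : ∀ σ : A ≃ₐ[K] A, ∀ x ∈ R, σ x ∈ R) (htr : ∀ x ∈ R, ∀ y ∈ R, ∃ σ : A ≃ₐ[K] A, σ x = y)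
    (σ₀ : A ≃ₐ[K] A) (hm : ∃ x ∈ R, σ₀ x ≠ x) (Q : Finset A) (hQR : Q ⊆ R) (hQ : R.card ≤ Q.card + 2) 
    (hf : ∀ x ∈ Q, σ₀ x = x) (π : Equiv.Perm R) : ∃ σ : A ≃ₐ[K] A, ∀ x : R, σ x = π x := by
  classical
  let H : Subgroup (Equiv.Perm R) := 
    { carrier := {π | ∃ σ : A ≃ₐ[K] A, ∀ x : R, σ x = π x}
      mul_mem' := by
        rintro a b ⟨σ, hσ⟩ ⟨τ, hτ⟩
        exact ⟨σ * τ, fun x => by rw [AlgEquiv.mul_apply, hτ, hσ]; rfl⟩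
      one_mem' := ⟨1, fun x => rfl⟩
      inv_mem' := by
        rintro a ⟨σ, hσ⟩
        refine ⟨σ⁻¹, fun x => ?_⟩
        apply σ.injective
        rw [hσ, ← AlgEquiv.mul_apply, mul_inv_cancel]
        simp }
  have toH : ∀ σ : A ≃ₐ[K] A, ∃ π ∈ H, ∀ x : R, σ x = π x := by
    intro σ
    let f : R → R := fun x => ⟨σ x, hR σ x x.2⟩
    have hf : Function.Injective f := fun x y h => Subtype.ext (σ.injective (congrArg Subtype.val h))
    exact ⟨Equiv.ofBijective f (Finite.injective_iff_bijective.1 hf), ⟨σ, fun x => rfl⟩, fun x => rfl⟩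
  have htrans : MulAction.IsPretransitive H R := ⟨fun x y => by
    obtain ⟨σ, hσ⟩ := htr x x.2 y y.2
    obtain ⟨π, hπ, h⟩ := toH σ
    refine ⟨⟨π, hπ⟩, Subtype.ext ?_⟩
    rw [← hσ, h]; rfl⟩
  have hc : Fintype.card R = R.card := Fintype.card_coe R
  obtain ⟨x0, hx0, hm⟩ := hm
  have hdvd : Fintype.card R ∣ Fintype.card H := by
    have := MulAction.index_stabilizer_of_transitive H (⟨x0, hx0⟩ : R)
    rw [← Nat.card_eq_fintype_card, ← Nat.card_eq_fintype_card, ← this]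
    exact Subgroup.index_dvd_card _
  obtain ⟨π0, hπ0, h0⟩ := toH σ₀
  have hswap : π0.IsSwap := by
    rw [← Equiv.Perm.card_support_eq_two]
    have h1 : 1 < π0.support.card := by
      refine Equiv.Perm.one_lt_card_support_of_ne_one ?_
      rintro rfl
      exact hm (h0 ⟨x0, hx0⟩)
    have h2 : π0.support.card ≤ 2 := by
      have : (π0.support.map (Function.Embedding.subtype _)) ⊆ R \ Q := by
        intro x hx
        obtain ⟨y, hy, rfl⟩ := Finset.mem_map.1 hx
        rw [Finset.mem_sdiff]
        refine ⟨y.2, fun hq => ?_⟩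
        rw [Equiv.Perm.mem_support] at hy
        exact hy (Subtype.ext (by rw [← h0]; exact hf _ hq))
      have := Finset.card_le_card this
      rw [Finset.card_map, Finset.card_sdiff_of_subset hQR] at this
      omega
    omega
  have := Equiv.Perm.subgroup_eq_top_of_swap_mem (hc ▸ hp) hdvd hπ0 hswap
  have hπ : π ∈ H := this ▸ Subgroup.mem_top π
  exact hπ

end

section
open Polynomial
open scoped PowerSeries

noncomputable def ff {R : Type*} [CommRing R] (n : ℕ) (c d : R) : R[X] := X ^ n - C c * X ^ 2 - C d

lemma ff_map {R S : Type*} [CommRing R] [CommRing S] (f : R →+* S) (n : ℕ) (c d : R) :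
    (ff n c d).map f = ff n (f c) (f d) := by
  simp [ff]

lemma ff_eval {R : Type*} [CommRing R] (n : ℕ) (c d x : R) :
    (ff n c d).eval x = x ^ n - c * x ^ 2 - d := by
  simp [ff]

lemma ff_aeval {R S : Type*} [CommRing R] [CommRing S] [Algebra R S] (n : ℕ) (c d : R) (x : S) :
    aeval x (ff n c d) = x ^ n - algebraMap R S c * x ^ 2 - algebraMap R S d := by
  simp [ff]

lemma ff_deriv {R : Type*} [CommRing R] (n : ℕ) (c d x : R) :
    (ff n c d).derivative.eval x = n * x ^ (n - 1) - 2 * c * x := by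
  simp [ff, derivative_X_pow]; ring

lemma ff_coeff {R : Type*} [CommRing R] (n : ℕ) (c d : R) (i : ℕ) (hi : i < n) :
    (ff n c d).coeff i = - (if i = 2 then c else 0) - (if i = 0 then d else 0) := by
  simp [ff, coeff_X_pow, coeff_C, hi.ne]

lemma ff_deg {R : Type*} [CommRing R] [Nontrivial R] (n : ℕ) (hn : 3 ≤ n) (c d : R) :
    (ff n c d).natDegree = n ∧ (ff n c d).Monic := by
  have h : (C c * X ^ 2 + C d).degree < (n : WithBot ℕ) := by
    have : (C c * X ^ 2 + C d).natDegree ≤ 2 := by compute_degree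
    refine (degree_le_natDegree).trans_lt ?_
    exact_mod_cast (by omega)
  have e : ff n c d = X ^ n - (C c * X ^ 2 + C d) := by simp [ff]; ring
  constructor
  · rw [e]
    have h' := degree_sub_eq_left_of_degree_lt (p := (X ^ n : R[X])) (q := C c * X ^ 2 + C d) (by rwa [degree_X_pow])
    rw [degree_X_pow] at h'
    exact natDegree_eq_of_degree_eq_some h'
  · rw [e]
    exact monic_X_pow_sub h

lemma ff_loc1 {κ C B : Type*} [Field κ] [Field C] [Field B]
    [Algebra κ⟦X⟧ C] [IsFractionRing κ⟦X⟧ C] [Algebra C B] [Algebra κ⟦X⟧ B] [IsScalarTower κ⟦X⟧ C B]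
    (n : ℕ) (hn : 3 ≤ n) (c d : κ⟦X⟧) (hc : PowerSeries.constantCoeff c = 0) 
    (hd : PowerSeries.constantCoeff d = 0) (hd' : ¬ PowerSeries.X ^ 2 ∣ d) (y : B) 
    (hy : aeval y (ff n c d) = 0) : (minpoly C y).natDegree = n := by
  have h := ff_deg n hn c d
  rw [pw_eisenstein (C := C) (ff n c d) h.2 (by rw [h.1]; omega) _ _ y hy, h.1]
  · intro i hi
    rw [h.1] at hi
    rw [ff_coeff _ _ _ _ hi]
    split_ifs <;> simp [hc, hd]
  · rw [ff_coeff _ _ _ _ (by omega)]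
    simpa using hd'

lemma ff_loc0a {κ : Type*} [Field κ] [IsAlgClosed κ]
    (n : ℕ) (hn : 3 ≤ n) (c d : κ⟦X⟧) (hc : PowerSeries.constantCoeff c ≠ 0) 
    (hd : PowerSeries.constantCoeff d = 0) (hn2 : ((n - 2 : ℕ) : κ) ≠ 0) :
    ∃ Q : Finset κ⟦X⟧, Q.card = n - 2 ∧ ∀ r ∈ Q, (ff n c d).eval r = 0 := by
  classical
  set c0 := PowerSeries.constantCoeff c with hc0
  have hsep : (X ^ (n - 2) - C c0 : κ[X]).Separable := separable_X_pow_sub_C _ hn2 hc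
  set R := (X ^ (n - 2) - C c0 : κ[X]).roots.toFinset with hR
  have hRc : R.card = n - 2 := by
    rw [hR, Multiset.toFinset_card_of_nodup (nodup_roots hsep), 
      ← (IsAlgClosed.splits (X ^ (n - 2) - C c0 : κ[X])).natDegree_eq_card_roots, natDegree_X_pow_sub_C]
  have hRm : ∀ a ∈ R, a ^ (n - 2) = c0 := by
    intro a ha
    rw [hR, Multiset.mem_toFinset] at ha
    have := isRoot_of_mem_roots ha
    simpa [sub_eq_zero] using this
  have key : ∀ a : κ, ∃ r : κ⟦X⟧, a ∈ R → (ff n c d).eval r = 0 ∧ PowerSeries.constantCoeff r = a := by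
    intro a
    by_cases ha : a ∈ R
    · have h1 := hRm a ha
      have ha0 : a ≠ 0 := by
        rintro rfl
        rw [zero_pow (by omega)] at h1
        exact hc h1.symm
      obtain ⟨m, rfl⟩ : ∃ m, n = m + 2 := ⟨n - 2, by omega⟩
      simp only [Nat.add_sub_cancel] at h1 hn2
      obtain ⟨r, hr⟩ := pw_hensel (ff (m+2) c d) (ff_deg _ hn c d).2 a (by
        rw [ff_map, ff_eval, hd, pow_add, h1, ← hc0]; ring) (by
        rw [ff_map, ff_deriv, ← hc0, show m + 2 - 1 = m + 1 from rfl, pow_succ, h1]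
        have : ((m+2 : ℕ) : κ) * (c0 * a) - 2 * c0 * a = m * c0 * a := by push_cast; ring
        rw [this]
        exact mul_ne_zero (mul_ne_zero hn2 hc) ha0)
      exact ⟨r, fun _ => hr⟩
    · exact ⟨0, fun h => absurd h ha⟩
  choose r hr using key
  refine ⟨R.image r, ?_, ?_⟩
  · rw [Finset.card_image_of_injOn, hRc]
    intro a ha b hb hab
    rw [← (hr a ha).2, ← (hr b hb).2, hab]
  · intro x hx
    obtain ⟨a, ha, rfl⟩ := Finset.mem_image.1 hx
    exact (hr a ha).1

lemma ff_loc0b {κ C B : Type*} [Field κ] [Field C] [Field B]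
    [Algebra κ⟦X⟧ C] [IsFractionRing κ⟦X⟧ C] [Algebra C B] [Algebra κ⟦X⟧ B] [IsScalarTower κ⟦X⟧ C B]
    [IsAlgClosed B]
    (n : ℕ) (hn : 3 ≤ n) (c d : κ⟦X⟧) 
    (hd : PowerSeries.constantCoeff d = 0) (hd' : ¬ PowerSeries.X ^ 2 ∣ d) :
    ∃ y : B, aeval y (ff n c d) = 0 ∧ y ∉ (algebraMap C B).range := by
  by_contra hcon
  push Not at hcon
  have inj := OB_inj (κ := κ) C (B := B)
  have hm := (ff_deg n hn c d).2
  have key : ∀ y : B, ∃ r : κ⟦X⟧, aeval y (ff n c d) = 0 → algebraMap κ⟦X⟧ B r = y := by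
    intro y
    by_cases hy : aeval y (ff n c d) = 0
    · obtain ⟨z, hz⟩ := hcon y hy
      have hint : IsIntegral κ⟦X⟧ z := by
        refine ⟨ff n c d, hm, ?_⟩
        apply (algebraMap C B).injective
        rw [← aeval_def, ← aeval_algebraMap_apply, hz, hy, map_zero]
      obtain ⟨r, hr⟩ := IsIntegrallyClosed.isIntegral_iff.1 hint
      exact ⟨r, fun _ => by rw [IsScalarTower.algebraMap_apply κ⟦X⟧ C B, hr, hz]⟩
    · exact ⟨0, fun h => absurd h hy⟩
  choose r hr using key
  set M := ((ff n c d).map (algebraMap κ⟦X⟧ B)).roots with hM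
  have hMr : ∀ y ∈ M, aeval y (ff n c d) = 0 := by
    intro y hy
    have := isRoot_of_mem_roots hy
    rwa [IsRoot, eval_map_algebraMap] at this
  have hprod : ff n c d = (M.map fun y => X - Polynomial.C (r y)).prod := by
    apply map_injective _ inj
    rw [(IsAlgClosed.splits ((ff n c d).map (algebraMap κ⟦X⟧ B))).eq_prod_roots_of_monic (hm.map _),
      ← hM, Polynomial.map_multiset_prod, Multiset.map_map]
    congr 1
    apply Multiset.map_congr rfl
    intro y hy
    simp [hr y (hMr y hy)]
  have h0 := congrArg (fun p => PowerSeries.constantCoeff (R := κ) (eval 0 p)) hprod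
  simp only [ff_eval] at h0
  rw [eval_multiset_prod, map_multiset_prod, Multiset.map_map, Multiset.map_map] at h0
  have h00 : (Multiset.map ((⇑(PowerSeries.constantCoeff (R := κ)) ∘ eval 0) ∘ fun y ↦ X - Polynomial.C (r y)) M).prod = 0 := by
    rw [← h0]
    simp [hd, zero_pow (show n ≠ 0 by omega)]
  rw [Multiset.prod_eq_zero_iff, Multiset.mem_map] at h00
  obtain ⟨y, hy, hy0⟩ := h00
  simp at hy0
  have hroot : (ff n c d).eval (r y) = 0 := by
    apply inj
    rw [map_zero, ← hMr y hy]
    conv_rhs => rw [← hr y (hMr y hy), aeval_algebraMap_apply, coe_aeval_eq_eval]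
  rw [ff_eval] at hroot
  apply hd'
  have hX : PowerSeries.X ∣ r y := PowerSeries.X_dvd_iff.2 hy0
  have hX2 := pow_dvd_pow_of_dvd hX 2
  have : d = (r y) ^ 2 * ((r y) ^ (n - 2) - c) := by
    rw [mul_sub, ← pow_add, show 2 + (n - 2) = n by omega]
    linear_combination -hroot
  rw [this]
  exact hX2.mul_right _

lemma prime_ell (k : Type*) [Field k] (N : ℕ) : ∃ n : ℕ, n.Prime ∧ N < n ∧ 3 ≤ n ∧ (n : k) ≠ 0 ∧ 
    ((n - 2 : ℕ) : k) ≠ 0 := by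
  by_cases hp : ringChar k = 0
  · have := (CharP.ringChar_zero_iff_CharZero k).1 hp
    obtain ⟨n, hn, h⟩ := Nat.exists_infinite_primes (N + 3)
    exact ⟨n, h, by omega, by omega, by exact_mod_cast h.ne_zero, by exact_mod_cast (by omega)⟩
  · obtain ⟨n, h, hn, hm⟩ := Nat.exists_prime_gt_modEq_one (N + 3) hp
    have h1 : (n : k) = 1 := by
      have := (CharP.cast_eq_iff_mod_eq k (ringChar k) (a := n) (b := 1)).2 hm
      simpa using this
    refine ⟨n, h, by omega, by omega, by rw [h1]; exact one_ne_zero, ?_⟩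
    rw [Nat.cast_sub (by omega), h1]
    norm_num

end

section
open Polynomial
open scoped PowerSeries

lemma minpoly_eq_of_deg {F A : Type*} [Field F] [Field A] [Algebra F A] (x : A) (p : F[X]) (hp : p.Monic)
    (hx : aeval x p = 0) (hd : p.natDegree ≤ (minpoly F x).natDegree) : p = minpoly F x :=
  eq_of_monic_of_dvd_of_natDegree_le (minpoly.monic ⟨p, hp, hx⟩) hp (minpoly.dvd _ _ hx) hd

lemma aeval_equiv_zero {F A : Type*} [Field F] [Field A] [Algebra F A] (x : A) (p : F[X]) (σ : A ≃ₐ[F] A)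
    (hx : aeval x p = 0) : aeval (σ x) p = 0 := by
  have := aeval_algHom_apply (σ : A →ₐ[F] A) x p
  rw [hx, map_zero] at this
  exact this

lemma thm1_core (k κ K A C B : Type*) [Field k] [Field κ] [Algebra k κ] [IsAlgClosed κ]
    [Field K] [Field A] [Field C] [Field B]
    [Algebra k[X] K] [IsFractionRing k[X] K] [Algebra K A] [IsAlgClosure K A]
    [Algebra k K] [IsScalarTower k k[X] K] [Algebra k A] [IsScalarTower k K A]
    [Algebra κ⟦X⟧ C] [IsFractionRing κ⟦X⟧ C] [Algebra C B] [Algebra κ⟦X⟧ B] [IsScalarTower κ⟦X⟧ C B]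
    [IsAlgClosure C B] (L : IntermediateField K A) [FiniteDimensional K L] [Algebra.IsSeparable K L] 
    (N : ℕ) : ∃ (Λ : IntermediateField K A) (R : Finset A), L ≤ Λ ∧ 
      (∀ x : A, IsAlgebraic k x → x ∈ Λ) ∧ N < R.card ∧ (∀ x ∈ R, IsSeparable K x) ∧ 
      (∀ σ : A ≃ₐ[K] A, ∀ x ∈ R, σ x ∈ R) ∧ 
      ∀ π : Equiv.Perm R, ∃ σ : A ≃ₐ[Λ] A, ∀ x : R, σ x = π x := by
  classical
  have : IsAlgClosed B := IsAlgClosure.isAlgClosed C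
  have : IsAlgClosed A := IsAlgClosure.isAlgClosed K
  have hAalg : Algebra.IsAlgebraic K A := IsAlgClosure.isAlgebraic
  have hBalg : Algebra.IsAlgebraic C B := IsAlgClosure.isAlgebraic
  have hNB : Normal C B := inferInstance
  have hNA : Normal K A := inferInstance
  obtain ⟨S, hS⟩ := pl_goodfield (k := k) κ C B L
  obtain ⟨q, hq, -, t1, ht1S, ht11, ht1, ht1'⟩ := rou_exists k S 0
  obtain ⟨m, hm, hqm, t0, ht0S, ht01, ht0, ht0'⟩ := rou_exists k S q
  obtain ⟨n, hn, hnN, hn3, hn0, hn2⟩ := prime_ell k N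
  obtain ⟨ι1, h1⟩ := pl_exists k K A C B t1
  obtain ⟨ι0, h0⟩ := pl_exists k K A C B t0
  have hcop : Nat.Coprime q m := (Nat.coprime_primes hq hm).2 hqm.ne
  have unity : ∀ t : κ, t ≠ 1 → aeval t (X ^ q - 1 : k[X]) = 0 → aeval t (X ^ m - 1 : k[X]) = 0 → False := by
    intro t ht ha hb
    simp only [map_sub, map_pow, aeval_X, map_one, sub_eq_zero] at ha hb
    have := (pow_gcd_eq_one (a := t)).2 ⟨ha, hb⟩
    rw [hcop, pow_one] at this
    exact ht this
  set c : k[X] := X ^ q - 1 with hc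
  set d : k[X] := (X ^ q - 1) * (X ^ m - 1) with hd
  set cK := algebraMap k[X] K c with hcK
  set dK := algebraMap k[X] K d with hdK
  set f : K[X] := ff n cK dK with hf
  -- local data
  have place : ∀ (t : κ) (ι : A →+* B), IsPl k K t ι → ∀ x : A, 
      aeval (ι x) (ff n (pl_phi k t c) (pl_phi k t d)) = ι (aeval x f) := by
    intro t ι h x
    rw [hf, ff_aeval, ff_aeval, map_sub ι, map_sub ι, map_mul ι, map_pow ι, map_pow ι, hcK, hdK, h, h]
  have hd1 : aeval t1 (derivative d) ≠ 0 := by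
    rw [hd, derivative_mul, map_add, map_mul, map_mul, ht1, zero_mul, add_zero]
    exact mul_ne_zero ht1' fun h => unity t1 ht11 ht1 h
  have hd0 : aeval t0 (derivative d) ≠ 0 := by
    rw [hd, derivative_mul, map_add, map_mul, map_mul, ht0, mul_zero, zero_add]
    exact mul_ne_zero (fun h => unity t0 ht01 h ht0) ht0'
  set Λ : IntermediateField K A := pl_field C h0 ⊓ pl_field C h1 with hΛ
  have hΛ0 : Λ ≤ pl_field C h0 := inf_le_left
  have hΛ1 : Λ ≤ pl_field C h1 := inf_le_right
  have hNΛ : Normal Λ A := Normal.tower_top_of_normal K Λ A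
  have degf := ff_deg n hn3 cK dK
  have degΛ : ∀ x : A, aeval x f = 0 → n ≤ (minpoly Λ x).natDegree := by
    intro x hx
    have hx1 := place t1 ι1 h1 x
    rw [hx, map_zero] at hx1
    have := ff_loc1 (C := C) n hn3 (pl_phi k t1 c) (pl_phi k t1 d) (by rw [pl_phi_ev, ht1]) 
      (by rw [pl_phi_ev, hd, map_mul, ht1, zero_mul]) (pl_phi_simple _ _ hd1) (ι1 x) hx1
    rw [← this]
    exact pl_deg h1 Λ hΛ1 x (Normal.isIntegral hNΛ x)
  have minΛ : ∀ x : A, aeval x f = 0 → f.map (algebraMap K Λ) = minpoly Λ x := by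
    intro x hx
    refine minpoly_eq_of_deg _ _ (degf.2.map _) (by rw [aeval_map_algebraMap, hx]) ?_
    rw [natDegree_map, degf.1]
    exact degΛ x hx
  have minK : ∀ x : A, aeval x f = 0 → f = minpoly K x := by
    intro x hx
    refine minpoly_eq_of_deg _ _ degf.2 hx ?_
    have h2 := minpoly.dvd_map_of_isScalarTower K Λ x
    have hmo := minpoly.monic (Normal.isIntegral hNA x)
    have h3 := natDegree_le_of_dvd h2 (hmo.map _).ne_zero
    rw [natDegree_map] at h3
    rw [degf.1]
    exact (degΛ x hx).trans h3
  have hne : f ≠ 0 := degf.2.ne_zero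
  have hfs : f.Separable := by
    obtain ⟨x, hx⟩ := IsAlgClosed.exists_aeval_eq_zero A f (by rw [degree_eq_natDegree hne, degf.1]; exact_mod_cast hn.ne_zero)
    have hirr : Irreducible f := by
      rw [minK x hx]; exact minpoly.irreducible (Normal.isIntegral hNA x)
    rw [separable_iff_derivative_ne_zero hirr]
    intro h
    have := congrArg (fun p => coeff p (n - 1)) h
    simp only [coeff_derivative, coeff_zero] at this
    rw [Nat.sub_add_cancel (by omega)] at this
    have h3 : f.coeff n = 1 := by have := degf.2.coeff_natDegree; rwa [degf.1] at this
    rw [h3, one_mul] at this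
    have h4 : ((n - 1 : ℕ) : K) + 1 = (n : K) := by
      rw [Nat.cast_sub (by omega)]; simp
    rw [h4] at this
    apply hn0
    apply (algebraMap k K).injective
    rw [map_natCast, this, map_zero]
  set R : Finset A := (f.map (algebraMap K A)).roots.toFinset with hR
  have hRm : ∀ x, x ∈ R ↔ aeval x f = 0 := by
    intro x
    rw [hR, Multiset.mem_toFinset, mem_roots (map_ne_zero hne), IsRoot, eval_map_algebraMap]
  have hRcard : R.card = n := by
    rw [hR, Multiset.toFinset_card_of_nodup (nodup_roots hfs.map), 
      ← (IsAlgClosed.splits (f.map (algebraMap K A))).natDegree_eq_card_roots, natDegree_map, degf.1]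
  have lift0 : ∀ y : B, aeval y (ff n (pl_phi k t0 c) (pl_phi k t0 d)) = 0 → ∃ x ∈ R, ι0 x = y := by
    intro y hy
    have hs : (f.map (algebraMap K A)).Splits := IsAlgClosed.splits _
    have := hs.mem_range_of_isRoot (map_ne_zero hne) (i := ι0) (x := y) (by
      rw [hf, ff_map, ff_map, hcK, hdK, h0, h0, IsRoot, ← ff_map, eval_map_algebraMap, hy])
    obtain ⟨x, hx⟩ := this
    refine ⟨x, (hRm x).2 (ι0.injective ?_), hx⟩
    rw [← place t0 ι0 h0, hx, hy, map_zero]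
  refine ⟨Λ, R, le_inf (hS t0 ht0S ι0 h0) (hS t1 ht1S ι1 h1), 
    fun x hx => ⟨pl_alg h0 x hx, pl_alg h1 x hx⟩, by rw [hRcard]; exact hnN, ?_, ?_, ?_⟩
  · intro x hx
    rw [IsSeparable, ← minK x ((hRm x).1 hx)]
    exact hfs
  · intro σ x hx
    rw [hRm] at hx ⊢
    exact aeval_equiv_zero x f σ hx
  · -- the swap
    obtain ⟨Q0, hQ0c, hQ0⟩ := ff_loc0a n hn3 (pl_phi k t0 c) (pl_phi k t0 d) 
      (by rw [pl_phi_ev]; exact fun h => unity t0 ht01 h ht0)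
      (by rw [pl_phi_ev, hd, map_mul, ht0, mul_zero]) 
      (by intro h; apply hn2; apply (algebraMap k κ).injective; rw [map_natCast, h, map_zero])
    obtain ⟨y, hy, hyC⟩ := ff_loc0b (C := C) (B := B) n hn3 (pl_phi k t0 c) (pl_phi k t0 d) 
      (by rw [pl_phi_ev, hd, map_mul, ht0, mul_zero]) (pl_phi_simple _ _ hd0)
    obtain ⟨x0, hx0R, hx0⟩ := lift0 y hy
    have hysep : IsSeparable C y := by
      have hCs : (ff n (algebraMap κ⟦X⟧ C (pl_phi k t0 c)) (algebraMap κ⟦X⟧ C (pl_phi k t0 d))).Separable := by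
        rw [← separable_map (algebraMap C B), ff_map, ← IsScalarTower.algebraMap_apply, 
          ← IsScalarTower.algebraMap_apply, ← h0, ← h0, ← hcK, ← hdK, ← ff_map ι0, ← ff_map (algebraMap K A)]
        exact hfs.map.map
      refine hCs.of_dvd (minpoly.dvd _ _ ?_)
      rw [← ff_map, aeval_map_algebraMap, hy]
    have : ∃ σ : B ≃ₐ[C] B, σ y ≠ y := by
      by_contra hcon
      push Not at hcon
      exact hyC (fixed_mem y hysep hcon)
    obtain ⟨σB, hσB⟩ := this
    obtain ⟨σ', hσ'⟩ := pl_restrict h0 σB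
    have fix0 : ∀ x ∈ pl_field C h0, σ' x = x := by
      intro x hx
      obtain ⟨z, hz⟩ := (mem_pl_field h0 x).1 hx
      apply ι0.injective
      rw [hσ', ← hz, σB.commutes]
    let σ₀ : A ≃ₐ[Λ] A := AlgEquiv.ofRingEquiv (f := (σ' : A ≃+* A)) (fun x => fix0 x (hΛ0 x.2))
    have hσ₀ : ∀ x, σ₀ x = σ' x := fun x => rfl
    let Q : Finset A := R.filter (fun x => x ∈ pl_field C h0)
    apply sym_lemma (K := Λ) R (by rw [hRcard]; exact hn) _ _ σ₀ ⟨x0, hx0R, _⟩ Q (Finset.filter_subset _ _) _ _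
    · intro σ x hx
      rw [hRm] at hx ⊢
      exact aeval_equiv_zero x f (σ.restrictScalars K) hx
    · intro x hx y hy
      obtain ⟨σ, hσ⟩ := isConjRoot_iff_exists_algEquiv.1 (show IsConjRoot Λ y x by
        rw [isConjRoot_def, ← minΛ x ((hRm x).1 hx), ← minΛ y ((hRm y).1 hy)])
      exact ⟨σ, hσ⟩
    · rw [hσ₀]
      intro h
      apply hσB
      rw [← hx0, ← hσ', h]
    · have : Q0.card ≤ Q.card := by
        have : ∀ r : κ⟦X⟧, ∃ x : A, r ∈ Q0 → x ∈ R ∧ ι0 x = algebraMap κ⟦X⟧ B r := by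
          intro r
          by_cases hr : r ∈ Q0
          · obtain ⟨x, hx⟩ := lift0 (algebraMap κ⟦X⟧ B r) (by
              rw [aeval_algebraMap_apply, coe_aeval_eq_eval, hQ0 r hr, map_zero])
            exact ⟨x, fun _ => hx⟩
          · exact ⟨0, fun h => absurd h hr⟩
        choose g hg using this
        apply Finset.card_le_card_of_injOn g
        · intro r hr
          refine Finset.mem_filter.2 ⟨(hg r hr).1, (mem_pl_field h0 _).2 ⟨algebraMap κ⟦X⟧ C r, ?_⟩⟩
          rw [(hg r hr).2, ← IsScalarTower.algebraMap_apply]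
        · intro r hr s hs hrs
          apply OB_inj (κ := κ) C (B := B)
          rw [← (hg r hr).2, ← (hg s hs).2, hrs]
      omega
    · intro x hx
      rw [hσ₀]
      exact fix0 x (Finset.mem_filter.1 hx).2

end

section
open Polynomial
open scoped PowerSeries

lemma thm1 {k K A : Type*} [Field k] 
    [Field K] [Field A] [Algebra K A] [Normal K A] [Algebra k A]
    (L : IntermediateField K A) [FiniteDimensional K L] [Algebra.IsSeparable K L] 
    {G : Type*} [Group G] [Finite G] (α : G →* (L ≃ₐ[K] L))
    (core : ∃ (Λ : IntermediateField K A) (R : Finset A), L ≤ Λ ∧ 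
      (∀ x : A, IsAlgebraic k x → x ∈ Λ) ∧ Nat.card G < R.card ∧ (∀ x ∈ R, IsSeparable K x) ∧ 
      (∀ σ : A ≃ₐ[K] A, ∀ x ∈ R, σ x ∈ R) ∧ 
      ∀ π : Equiv.Perm R, ∃ σ : A ≃ₐ[Λ] A, ∀ x : R, σ x = π x) :
    ∃ (E1 : IntermediateField K A) (hLE : L ≤ E1), FiniteDimensional K E1 ∧ Algebra.IsSeparable K E1 ∧
      (∀ x ∈ E1, IsAlgebraic k x → x ∈ L) ∧ ∃ φ : G →* (E1 ≃ₐ[K] E1), Function.Injective φ ∧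
        ∀ g x (hx : x ∈ L), ((φ g ⟨x, hLE hx⟩ : E1) : A) = ((α g ⟨x, hx⟩ : L) : A) := by
  classical
  obtain ⟨Λ, R, hLΛ, halg, hcard, hsep, hR, hsym⟩ := core
  have : Fintype G := Fintype.ofFinite G
  obtain ⟨e⟩ : Nonempty (G ↪ R) := by
    apply Function.Embedding.nonempty_of_card_le
    rw [Nat.card_eq_fintype_card] at hcard
    rw [Fintype.card_coe]; omega
  let π : G →* Equiv.Perm R := (Equiv.Perm.viaEmbeddingHom e).comp (MulAction.toPermHom G G)
  have hπ : Function.Injective π := 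
    (Equiv.Perm.viaEmbeddingHom_injective e).comp MulAction.toPerm_injective
  have perm : ∀ σ : A ≃ₐ[K] A, ∃ π : Equiv.Perm R, ∀ x : R, σ x = π x := by
    intro σ
    let f : R → R := fun x => ⟨σ x, hR σ x x.2⟩
    have hf : Function.Injective f := fun x y h => Subtype.ext (σ.injective (congrArg Subtype.val h))
    exact ⟨Equiv.ofBijective f (Finite.injective_iff_bijective.1 hf), fun x => rfl⟩
  have key : ∀ g : G, ∃ τ : A ≃ₐ[K] A, (∀ x : L, τ x = (α g x : L)) ∧ ∀ x : R, τ x = (π g x : R) := by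
    intro g
    obtain ⟨π1, h1⟩ := perm ((α g).liftNormal A)
    obtain ⟨σ2, h2⟩ := hsym (π1⁻¹ * π g)
    refine ⟨(σ2.restrictScalars K).trans ((α g).liftNormal A), fun x => ?_, fun x => ?_⟩
    · have : σ2 (x : A) = x := σ2.commutes ⟨x, hLΛ x.2⟩
      change (α g).liftNormal A (σ2 x) = _
      rw [this]
      exact (α g).liftNormal_commutes A x
    · change (α g).liftNormal A (σ2 x) = _
      rw [h2, h1]
      simp
  choose τ hτL hτR using key
  set s : Set A := (L : Set A) ∪ (R : Set A) with hs
  have hLs : ∀ x ∈ L, x ∈ IntermediateField.adjoin K s := fun x hx => 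
    IntermediateField.subset_adjoin K s (Or.inl hx)
  have hRs : ∀ x ∈ R, x ∈ IntermediateField.adjoin K s := fun x hx => 
    IntermediateField.subset_adjoin K s (Or.inr hx)
  obtain ⟨Φ, hΦ⟩ := hom_builder s τ (by
      rintro g x (hx | hx)
      · have := hτL g ⟨x, hx⟩
        simp only at this
        rw [this]
        exact hLs _ (α g ⟨x, hx⟩).2
      · have := hτR g ⟨x, hx⟩
        simp only at this
        rw [this]
        exact hRs _ (π g ⟨x, hx⟩).2) (by
      rintro g h x (hx | hx)
      · rw [hτL (g * h) ⟨x, hx⟩, hτL h ⟨x, hx⟩, hτL, map_mul]; rfl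
      · rw [hτR (g * h) ⟨x, hx⟩, hτR h ⟨x, hx⟩, hτR, map_mul]; rfl)
  have hsepA : ∀ x ∈ s, IsSeparable K x := by
    rintro x (hx | hx)
    · have := Algebra.IsSeparable.isSeparable K (⟨x, hx⟩ : L)
      rw [IsSeparable] at this ⊢
      rwa [← minpoly.algebraMap_eq (algebraMap L A).injective] at this
    · exact hsep x hx
  have hsepE : Algebra.IsSeparable K (IntermediateField.adjoin K s) :=
    (IntermediateField.isSeparable_adjoin_iff_isSeparable K A).2 hsepA
  refine ⟨IntermediateField.adjoin K s, hLs, ?_, hsepE, ?_, Φ, ?_, ?_⟩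
  · have h1 : FiniteDimensional K (IntermediateField.adjoin K (R : Set A)) := 
      IntermediateField.finiteDimensional_adjoin fun x hx => (hsep x hx).isIntegral
    have h2 : IntermediateField.adjoin K s = L ⊔ IntermediateField.adjoin K (R : Set A) := by
      rw [hs, IntermediateField.adjoin_union, IntermediateField.adjoin_self]
    rw [h2]
    infer_instance
  · intro x hx hxa
    have hxs : IsSeparable K x := by
      have := Algebra.IsSeparable.isSeparable K (⟨x, hx⟩ : IntermediateField.adjoin K s)
      rw [IsSeparable] at this ⊢
      rwa [← minpoly.algebraMap_eq (algebraMap (IntermediateField.adjoin K s) A).injective] at this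
    have hN : Normal L A := Normal.tower_top_of_normal K L A
    have hxL : IsSeparable L x := hxs.tower_top L
    obtain ⟨y, hy⟩ := fixed_mem x hxL (by
      intro σ
      obtain ⟨π1, h1⟩ := perm (σ.restrictScalars K)
      obtain ⟨σ2, h2⟩ := hsym π1
      have := agree_adjoin s (σ.restrictScalars K : A →ₐ[K] A) (σ2.restrictScalars K : A →ₐ[K] A) (by
        rintro x (hx | hx)
        · exact (σ.commutes ⟨x, hx⟩).trans (σ2.commutes ⟨x, hLΛ hx⟩).symm
        · exact (h1 ⟨x, hx⟩).trans (h2 ⟨x, hx⟩).symm) x hx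
      exact this.trans (σ2.commutes ⟨x, halg x hxa⟩))
    rw [← hy]
    exact y.2
  · intro g h hgh
    apply hπ
    ext x
    rw [← hτR, ← hτR, ← hΦ g ⟨x, hRs x x.2⟩, hgh, hΦ]
  · intro g x hx
    rw [hΦ]
    exact hτL g ⟨x, hx⟩

end

section
open Polynomial
open scoped PowerSeries

lemma gal_lemma {K A : Type*} [Field K] [Field A] [Algebra K A] (E : IntermediateField K A) 
    [FiniteDimensional K E] {G : Type*} [Group G] (φ : G →* (E ≃ₐ[K] E)) (σ : A ≃ₐ[K] A) 
    (hσ : ∀ x : E, (∀ g, φ g x = x) → σ x = x) : ∃ g, ∀ x : E, σ x = (φ g x : E) := by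
  let F := IntermediateField.fixedField φ.range
  have hG : Normal F E := (IsGalois.of_fixed_field E φ.range).to_normal
  have hF : ∀ x : F, σ (algebraMap F A x) = algebraMap F A x := by
    intro x
    exact hσ x fun g => x.2 ⟨φ g, g, rfl⟩
  let σF : A ≃ₐ[F] A := AlgEquiv.ofRingEquiv (f := (σ : A ≃+* A)) hF
  let ρ : E ≃ₐ[F] E := σF.restrictNormal E
  have hρ : ∀ x : E, ((ρ x : E) : A) = σ x := fun x => σF.restrictNormal_commutes E x
  have hm : ρ.restrictScalars K ∈ F.fixingSubgroup := by
    rw [IntermediateField.mem_fixingSubgroup_iff]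
    intro x hx
    exact ρ.commutes ⟨x, hx⟩
  rw [IntermediateField.fixingSubgroup_fixedField] at hm
  obtain ⟨g, hg⟩ := hm
  refine ⟨g, fun x => ?_⟩
  rw [hg, ← hρ]
  rfl

lemma int_prim {k K A : Type*} [Field k] [Field K] [Field A] [Algebra k[X] K] [IsFractionRing k[X] K] [Algebra K A]
    (F : IntermediateField K A) [FiniteDimensional K F] [Algebra.IsSeparable K F] :
    ∃ (b : A) (g : k[X][X]), b ∈ F ∧ F ≤ IntermediateField.adjoin K {b} ∧ b ≠ 0 ∧ g.Monic ∧
      g.map (algebraMap k[X] K) = minpoly K b ∧ IsSeparable K b := by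
  obtain ⟨b0, hb0⟩ := Field.exists_primitive_element K F
  let _ : Algebra k[X] A := ((algebraMap K A).comp (algebraMap k[X] K)).toAlgebra
  have : IsScalarTower k[X] K A := IsScalarTower.of_algebraMap_eq fun _ => rfl
  have hF : F = IntermediateField.adjoin K {(b0 : A)} := by
    have := congrArg IntermediateField.lift hb0
    rw [IntermediateField.lift_adjoin_simple, IntermediateField.lift_top] at this
    exact this.symm
  obtain ⟨b, hbF, hFb, hb⟩ : ∃ b : A, b ∈ F ∧ F ≤ IntermediateField.adjoin K {b} ∧ b ≠ 0 := by
    by_cases h : (b0 : A) = 0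
    · refine ⟨1, one_mem _, ?_, one_ne_zero⟩
      rw [hF, h, IntermediateField.adjoin_le_iff, Set.singleton_subset_iff]
      exact zero_mem _
    · exact ⟨b0, b0.2, hF.le, h⟩
  have halgK : IsAlgebraic K b := by
    have : IsAlgebraic K (⟨b, hbF⟩ : F) := Algebra.IsAlgebraic.isAlgebraic _
    exact this.algebraMap (A := A)
  have halg : IsAlgebraic k[X] b := (IsFractionRing.isAlgebraic_iff k[X] K A).2 halgK
  obtain ⟨y, hy0, hy⟩ := halg.exists_integral_multiple
  have hyK : algebraMap k[X] K y ≠ 0 := by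
    rw [Ne, map_eq_zero_iff _ (IsFractionRing.injective k[X] K)]; exact hy0
  have hyb : y • b = algebraMap k[X] K y • b := (algebraMap_smul K y b).symm
  have hyF : y • b ∈ F := by rw [hyb]; exact F.smul_mem hbF
  refine ⟨y • b, minpoly k[X] (y • b), hyF, ?_, ?_, minpoly.monic hy, 
    (minpoly.isIntegrallyClosed_eq_field_fractions' K hy).symm, ?_⟩
  · refine hFb.trans ?_
    rw [IntermediateField.adjoin_le_iff, Set.singleton_subset_iff]
    have : b = (algebraMap k[X] K y)⁻¹ • (y • b) := by
      rw [hyb, smul_smul, inv_mul_cancel₀ hyK, one_smul]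
    have h2 := (IntermediateField.adjoin K {y • b}).smul_mem (x := (algebraMap k[X] K y)⁻¹)
      (IntermediateField.mem_adjoin_simple_self K (y • b))
    rw [← this] at h2
    exact h2
  · rw [hyb]; exact smul_ne_zero hyK hb
  · have := Algebra.IsSeparable.isSeparable K (⟨y • b, hyF⟩ : F)
    rw [IsSeparable] at this ⊢
    rwa [← minpoly.algebraMap_eq (algebraMap F A).injective] at this

lemma rev_zero {R F : Type*} [CommRing R] [Field F] (f : R →+* F) (g : R[X]) (x : F) (Y : R) (h : f Y * x = 1) : 
    f (g.reverse.eval Y) = 0 ↔ eval₂ f x g = 0 := by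
  let _ : Invertible x := ⟨f Y, h, by rw [mul_comm, h]⟩
  rw [← eval₂_reverse_eq_zero_iff f x g]
  change _ ↔ eval₂ f (f Y) g.reverse = 0
  rw [eval₂_at_apply]

lemma pw_root_lift {κ C B : Type*} [Field κ] [Field C] [Field B]
    [Algebra κ⟦X⟧ C] [IsFractionRing κ⟦X⟧ C] [Algebra C B] [Algebra κ⟦X⟧ B] [IsScalarTower κ⟦X⟧ C B]
    [IsAlgClosed B] (P : κ⟦X⟧[X]) (hm : P.Monic) 
    (hcon : ∀ y : B, aeval y P = 0 → ∃ r, algebraMap κ⟦X⟧ B r = y) (a : κ) 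
    (ha : eval₂ (PowerSeries.constantCoeff (R := κ)) a P = 0) : 
    ∃ r : κ⟦X⟧, P.eval r = 0 ∧ PowerSeries.constantCoeff r = a := by
  have inj := OB_inj (κ := κ) C (B := B)
  have key : ∀ y : B, ∃ r : κ⟦X⟧, aeval y P = 0 → algebraMap κ⟦X⟧ B r = y := by
    intro y
    by_cases hy : aeval y P = 0
    · obtain ⟨r, hr⟩ := hcon y hy
      exact ⟨r, fun _ => hr⟩
    · exact ⟨0, fun h => absurd h hy⟩
  choose r hr using key
  set M := (P.map (algebraMap κ⟦X⟧ B)).roots with hM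
  have hMr : ∀ y ∈ M, aeval y P = 0 := by
    intro y hy
    have := isRoot_of_mem_roots hy
    rwa [IsRoot, eval_map_algebraMap] at this
  have hprod : P = (M.map fun y => X - Polynomial.C (r y)).prod := by
    apply map_injective _ inj
    rw [(IsAlgClosed.splits (P.map (algebraMap κ⟦X⟧ B))).eq_prod_roots_of_monic (hm.map _),
      ← hM, Polynomial.map_multiset_prod, Multiset.map_map]
    congr 1
    apply Multiset.map_congr rfl
    intro y hy
    simp [hr y (hMr y hy)]
  rw [hprod, eval₂_multiset_prod, Multiset.prod_eq_zero_iff, Multiset.map_map, Multiset.mem_map] at ha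
  obtain ⟨y, hy, hy0⟩ := ha
  simp [sub_eq_zero] at hy0
  refine ⟨r y, ?_, hy0.symm⟩
  apply inj
  rw [map_zero, ← hMr y hy]
  conv_rhs => rw [← hr y (hMr y hy), aeval_algebraMap_apply, coe_aeval_eq_eval]

lemma choose_Y {k κ : Type*} [Field k] [Field κ] [Algebra k κ] [IsAlgClosed κ] [Algebra.IsAlgebraic k κ]
    (g : k[X][X]) (hg : g.Monic) (hd : 0 < g.natDegree) (h0 : g.coeff 0 ≠ 0) (S : Finset κ) :
    ∃ (Y : k[X]) (t : κ), t ∉ S ∧ aeval t Y ≠ 0 ∧ aeval t (g.reverse.eval Y) = 0 ∧ g.reverse.eval Y ≠ 0 := by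
  classical
  set D : k[X] := ∏ s ∈ insert 0 S, minpoly k s with hD
  have hint : ∀ s : κ, IsIntegral k s := fun s => (Algebra.IsAlgebraic.isAlgebraic s).isIntegral
  have hDm : D.Monic := monic_prod_of_monic _ _ fun s _ => minpoly.monic (hint s)
  have hDs : ∀ s ∈ insert 0 S, aeval s D = 0 := by
    intro s hs
    rw [hD, map_prod]
    exact Finset.prod_eq_zero hs (minpoly.aeval k s)
  have hDd : 0 < D.natDegree := by
    rw [Nat.pos_iff_ne_zero]
    intro h
    have h1 := hDm.natDegree_eq_zero.1 h
    have h2 := hDs 0 (Finset.mem_insert_self _ _)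
    rw [h1, map_one] at h2
    exact one_ne_zero h2
  set h := g.reverse with hh
  have h1 : h.eval 0 = 1 := by
    rw [← coeff_zero_eq_eval_zero, hh, coeff_zero_reverse, hg]
  have hne : h - 1 ≠ 0 := by
    intro hz
    have := congrArg (fun p => coeff p g.natDegree) hz
    simp only [coeff_sub, coeff_zero, coeff_one, hd.ne', if_false, sub_zero] at this
    rw [hh, coeff_reverse, revAt_le le_rfl, Nat.sub_self] at this
    exact h0 this
  obtain ⟨j, hj1, hj⟩ : ∃ j, 1 ≤ j ∧ (h - 1).eval (D ^ j) ≠ 0 := by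
    by_contra hcon
    push Not at hcon
    apply hne
    apply eq_zero_of_infinite_isRoot
    refine Set.Infinite.mono (s := Set.range fun j : ℕ => D ^ (j + 1)) ?_ ?_
    · rintro _ ⟨j, rfl⟩
      exact hcon (j + 1) (by omega)
    · apply Set.infinite_range_of_injective
      intro i j hij
      have := congrArg natDegree hij
      simp only [hDm.natDegree_pow] at this
      have := Nat.eq_of_mul_eq_mul_right hDd this
      omega
  set Y := D ^ j with hY
  have hYs : ∀ s ∈ insert 0 S, aeval s Y = 0 := by
    intro s hs
    rw [hY, map_pow, hDs s hs, zero_pow (by omega)]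
  obtain ⟨w, hw⟩ := sub_dvd_eval_sub Y 0 h
  rw [h1, sub_zero] at hw
  have hN : h.eval Y = 1 + Y * w := by rw [← hw]; ring
  have hN1 : ∀ t : κ, aeval t Y = 0 → aeval t (h.eval Y) = 1 := by
    intro t ht
    rw [hN, map_add, map_mul, ht, zero_mul, add_zero, map_one]
  have hNd : (h.eval Y).degree ≠ 0 := by
    intro hdeg
    obtain ⟨c, hc⟩ := natDegree_eq_zero.1 (natDegree_eq_of_degree_eq_some hdeg)
    have h2 := hN1 0 (hYs 0 (Finset.mem_insert_self _ _))
    rw [← hc, aeval_C] at h2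
    have hc1 : c = 1 := by
      apply (algebraMap k κ).injective
      rw [h2, map_one]
    apply hj
    rw [eval_sub, eval_one, ← hc, hc1, map_one, sub_self]
  obtain ⟨t, ht⟩ := IsAlgClosed.exists_aeval_eq_zero κ (h.eval Y) hNd
  have htY : aeval t Y ≠ 0 := by
    intro hz
    rw [hN1 t hz] at ht
    exact one_ne_zero ht
  refine ⟨Y, t, fun hS => htY (hYs t (Finset.mem_insert_of_mem hS)), htY, ht, ?_⟩
  intro hz
  have h2 := hN1 0 (hYs 0 (Finset.mem_insert_self _ _))
  rw [hz, map_zero] at h2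
  exact zero_ne_one h2

end

section
open Polynomial
open scoped PowerSeries

lemma t2_data (k κ K A C B : Type*) [Field k] [Field κ] [Algebra k κ] [IsAlgClosed κ] [Algebra.IsAlgebraic k κ]
    [Field K] [Field A] [Field C] [Field B]
    [Algebra k[X] K] [IsFractionRing k[X] K] [Algebra K A] [IsAlgClosure K A]
    [Algebra κ⟦X⟧ C] [IsFractionRing κ⟦X⟧ C] [Algebra C B] [Algebra κ⟦X⟧ B] [IsScalarTower κ⟦X⟧ C B]
    [IsAlgClosure C B] (E F : IntermediateField K A) [FiniteDimensional K E] [Algebra.IsSeparable K E] 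
    (hFE : F ≤ E) : 
    ∃ (b : A) (Y a : k[X]) (t0 t1 : κ) (ι ι1 : A →+* B) (h0 : IsPl k K t0 ι) (h1 : IsPl k K t1 ι1),
      b ∈ F ∧ F ≤ IntermediateField.adjoin K {b} ∧ E ≤ pl_field C h0 ∧ E ≤ pl_field C h1 ∧
      1 - algebraMap K A (algebraMap k[X] K Y) * b ≠ 0 ∧ 
      (∃ e : κ⟦X⟧, PowerSeries.constantCoeff e = 0 ∧ 
        algebraMap κ⟦X⟧ B e = ι (1 - algebraMap K A (algebraMap k[X] K Y) * b)) ∧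
      (∀ b' : A, aeval b' (minpoly K b) = 0 → b' ≠ b → ∃ u : κ⟦X⟧, PowerSeries.constantCoeff u ≠ 0 ∧ 
        algebraMap κ⟦X⟧ B u = ι (1 - algebraMap K A (algebraMap k[X] K Y) * b')) ∧ 
      (∃ u : κ⟦X⟧, PowerSeries.constantCoeff u ≠ 0 ∧ 
        algebraMap κ⟦X⟧ B u = ι1 (1 - algebraMap K A (algebraMap k[X] K Y) * b)) ∧ 
      a ≠ 0 ∧ aeval t0 a = 0 ∧ aeval t1 a = 0 ∧ aeval t1 (derivative a) ≠ 0 := by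
  classical
  have : IsAlgClosed B := IsAlgClosure.isAlgClosed C
  have : IsAlgClosed A := IsAlgClosure.isAlgClosed K
  have hAalg : Algebra.IsAlgebraic K A := IsAlgClosure.isAlgebraic
  have hNA : Normal K A := inferInstance
  have inj := OB_inj (κ := κ) C (B := B)
  let _ : Algebra F E := (IntermediateField.inclusion hFE).toAlgebra
  have hFf : FiniteDimensional K F := FiniteDimensional.of_injective (IntermediateField.inclusion hFE).toLinearMap 
    (IntermediateField.inclusion_injective hFE)
  have hFs : Algebra.IsSeparable K F := Algebra.IsSeparable.of_algHom K E (IntermediateField.inclusion hFE)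
  obtain ⟨b, g, hbF, hFb, hb0, hgm, hgK, hbs⟩ := int_prim (k := k) F
  have hbint : IsIntegral K b := hbs.isIntegral
  have hgd : g.natDegree = (minpoly K b).natDegree := by
    rw [← hgK, hgm.natDegree_map]
  have hg0 : g.coeff 0 ≠ 0 := by
    intro h
    have := minpoly.coeff_zero_ne_zero hbint hb0
    rw [← hgK, coeff_map, h, map_zero] at this
    exact this rfl
  obtain ⟨S1, hS1⟩ := pl_goodfield (k := k) κ C B E
  obtain ⟨S2, hS2⟩ := pl_good (k := k) (A := A) κ C B (minpoly K b) (minpoly.monic hbint) hbs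
  obtain ⟨Y, t0, ht0, htY, htN, hN⟩ := choose_Y (κ := κ) g hgm (by rw [hgd]; exact minpoly.natDegree_pos hbint) hg0 (S1 ∪ S2)
  rw [Finset.mem_union, not_or] at ht0
  -- roots of g under a place
  have place : ∀ (t : κ) (ι : A →+* B), IsPl k K t ι → ∀ x : A, 
      aeval (ι x) (g.map (pl_phi k t)) = ι (aeval x (minpoly K b)) := by
    intro t ι h x
    rw [← hgK, aeval_def, aeval_def, eval₂_map, eval₂_map, hom_eval₂]
    congr 1
    exact RingHom.ext fun p => (h p).symm
  have placeO : ∀ (t : κ) (ι : A →+* B), IsPl k K t ι → ∀ x : A, aeval x (minpoly K b) = 0 → 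
      ∀ r, algebraMap κ⟦X⟧ B r = ι x → (g.map (pl_phi k t)).eval r = 0 := by
    intro t ι h x hx r hr
    apply inj
    have := place t ι h x
    rw [← hr, aeval_algebraMap_apply, coe_aeval_eq_eval, hx, map_zero] at this
    rw [this, map_zero]
  have hev : ∀ t : κ, (PowerSeries.constantCoeff (R := κ)).comp (pl_phi k t) = (aeval t : k[X] →ₐ[k] κ).toRingHom := by
    intro t
    exact RingHom.ext fun p => pl_phi_ev t p
  -- choose the place over t0
  obtain ⟨ι0, h00⟩ := pl_exists k K A C B t0
  have lift0 : ∀ y : B, aeval y (g.map (pl_phi k t0)) = 0 → ∃ x, aeval x (minpoly K b) = 0 ∧ ι0 x = y := by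
    intro y hy
    have hs : ((minpoly K b).map (algebraMap K A)).Splits := IsAlgClosed.splits _
    have := hs.mem_range_of_isRoot (map_ne_zero (minpoly.ne_zero hbint)) (i := ι0) (x := y) (by
      rw [IsRoot, ← hgK, map_map, map_map, ← hy, aeval_def, eval₂_map, eval_map]
      congr 1
      exact RingHom.ext fun p => h00 p)
    obtain ⟨x, hx⟩ := this
    refine ⟨x, ι0.injective ?_, hx⟩
    rw [← place t0 ι0 h00, hx, hy, map_zero]
  obtain ⟨r, hr, hra⟩ := pw_root_lift (C := C) (B := B) (g.map (pl_phi k t0)) (hgm.map _) (by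
    intro y hy
    obtain ⟨x, hx, rfl⟩ := lift0 y hy
    exact (hS2 t0 ht0.2 ι0 h00).1 x hx) (aeval t0 Y)⁻¹ (by
      rw [eval₂_map, hev]
      exact (rev_zero _ g _ Y (mul_inv_cancel₀ htY)).1 htN)
  obtain ⟨b', hb', hrb'⟩ := lift0 (algebraMap κ⟦X⟧ B r) (by 
    rw [aeval_algebraMap_apply, coe_aeval_eq_eval, hr, map_zero])
  obtain ⟨τ, hτ⟩ := isConjRoot_iff_exists_algEquiv.1 
    ((isConjRoot_iff_aeval_eq_zero hbint).2 hb').symm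
  have h0 := h00.comp τ
  set ι := ι0.comp (τ : A →+* A) with hι
  have hιb : algebraMap κ⟦X⟧ B r = ι b := by
    rw [← hrb', ← hτ]; rfl
  -- the second place
  obtain ⟨q, hq, -, t1, ht1S, -, ht1, ht1'⟩ := rou_exists k (S1 ∪ S2 ∪ 
    ((g.reverse.eval Y).map (algebraMap k κ)).roots.toFinset ∪ ((minpoly k t0).map (algebraMap k κ)).roots.toFinset) 0
  simp only [Finset.mem_union, not_or] at ht1S
  have hint0 : IsIntegral k t0 := (Algebra.IsAlgebraic.isAlgebraic t0).isIntegral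
  have ht1N : aeval t1 (g.reverse.eval Y) ≠ 0 := by
    intro h
    apply ht1S.1.2
    rw [Multiset.mem_toFinset, mem_roots ((Polynomial.map_ne_zero_iff (algebraMap k κ).injective).2 hN),
      IsRoot, eval_map_algebraMap, h]
  have ht1m : aeval t1 (minpoly k t0) ≠ 0 := by
    intro h
    apply ht1S.2
    rw [Multiset.mem_toFinset, mem_roots (map_ne_zero (minpoly.ne_zero hint0)),
      IsRoot, eval_map_algebraMap, h]
  obtain ⟨ι1, h1⟩ := pl_exists k K A C B t1
  have hY : ∀ (t : κ) (ι : A →+* B), IsPl k K t ι → ∀ x r, algebraMap κ⟦X⟧ B r = ι x →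
      algebraMap κ⟦X⟧ B (1 - pl_phi k t Y * r) = ι (1 - algebraMap K A (algebraMap k[X] K Y) * x) := by
    intro t ι h x r hr
    rw [map_sub, map_sub ι, map_mul, map_mul ι, h, hr, map_one, map_one]
  refine ⟨b, Y, minpoly k t0 * (X ^ q - 1), t0, t1, ι, ι1, h0, h1, hbF, hFb, hS1 t0 ht0.1 ι h0, 
    hS1 t1 ht1S.1.1.1 ι1 h1, ?_, ⟨_, ?_, hY t0 ι h0 b r hιb⟩, ?_, ?_, ?_, ?_, ?_, ?_⟩
  · intro he
    apply hN
    have := (rev_zero ((algebraMap K A).comp (algebraMap k[X] K)) g b Y (sub_eq_zero.1 he).symm).2 (by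
      rw [← eval₂_map, hgK, ← aeval_def, minpoly.aeval])
    rw [RingHom.comp_apply, map_eq_zero, map_eq_zero_iff _ (IsFractionRing.injective k[X] K)] at this
    exact this
  · rw [map_sub, map_one, map_mul, pl_phi_ev, hra, mul_inv_cancel₀ htY, sub_self]
  · intro b2 hb2 hne
    obtain ⟨r2, hr2⟩ := (hS2 t0 ht0.2 ι h0).1 b2 hb2
    refine ⟨_, ?_, hY t0 ι h0 b2 r2 hr2⟩
    rw [map_sub, map_one, map_mul, pl_phi_ev]
    intro hz
    apply hne
    refine (hS2 t0 ht0.2 ι h0).2 b2 b hb2 (minpoly.aeval _ _) r2 r hr2 hιb ?_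
    rw [hra]
    exact eq_inv_of_mul_eq_one_right (sub_eq_zero.1 hz).symm
  · obtain ⟨r1, hr1⟩ := (hS2 t1 ht1S.1.1.2 ι1 h1).1 b (minpoly.aeval _ _)
    refine ⟨_, ?_, hY t1 ι1 h1 b r1 hr1⟩
    rw [map_sub, map_one, map_mul, pl_phi_ev]
    intro hz
    apply ht1N
    refine (rev_zero (aeval t1 : k[X] →ₐ[k] κ).toRingHom g (PowerSeries.constantCoeff r1) Y (sub_eq_zero.1 hz).symm).2 ?_
    rw [← hev, ← eval₂_map]
    have := placeO t1 ι1 h1 b (minpoly.aeval _ _) r1 hr1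
    rw [eval₂_at_apply, this, map_zero]
  · refine mul_ne_zero (minpoly.ne_zero hint0) ?_
    intro h
    rw [h] at ht1'
    simp at ht1'
  · rw [map_mul, minpoly.aeval, zero_mul]
  · rw [map_mul, ht1, mul_zero]
  · rw [derivative_mul, map_add, map_mul, map_mul, ht1, mul_zero, zero_add]
    exact mul_ne_zero ht1m ht1'

end

section
open Polynomial
open scoped PowerSeries

lemma thm2_abs {k K A : Type*} [Field k] 
    [Field K] [Field A] [Algebra K A] [Normal K A] [Algebra k A]
    (E1 : IntermediateField K A) [FiniteDimensional K E1] [Algebra.IsSeparable K E1] 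
    {G : Type*} [Group G] (φ : G →* (E1 ≃ₐ[K] E1)) (hφ : Function.Injective φ)
    (Λ : IntermediateField K A) (hΛ : E1 ≤ Λ) (halg : ∀ x : A, IsAlgebraic k x → x ∈ Λ)
    (b : E1) (hb : ∀ g, φ g b = b) (hbF : ∀ x : E1, (∀ g, φ g x = x) → (x : A) ∈ IntermediateField.adjoin K {(b : A)})
    (w : A) (hw : IsSeparable K w) 
    (hconj : ∀ σ : A ≃ₐ[K] A, σ b = b → ∃ σ2 : A ≃ₐ[Λ] A, σ2 w = σ w)
    (hsurj : ∀ σ : A ≃ₐ[K] A, 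
      (∀ x ∈ IntermediateField.adjoin K ((E1 : Set A) ∪ {w}), σ x ∈ IntermediateField.adjoin K ((E1 : Set A) ∪ {w})) → 
      σ b = b ∧ σ w = w) :
    ∃ (E : IntermediateField K A) (hE : E1 ≤ E), FiniteDimensional K E ∧ Algebra.IsSeparable K E ∧
      (∀ x ∈ E, IsAlgebraic k x → x ∈ E1) ∧ ∃ β : (E ≃ₐ[K] E) ≃* G, 
        ∀ (σ : E ≃ₐ[K] E) x (hx : x ∈ E1), ((σ ⟨x, hE hx⟩ : E) : A) = ((φ (β σ) ⟨x, hx⟩ : E1) : A) := by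
  classical
  have key : ∀ g : G, ∃ τ : A ≃ₐ[K] A, (∀ x : E1, τ x = (φ g x : E1)) ∧ τ w = w := by
    intro g
    have h1 : ∀ x : E1, (φ g).liftNormal A x = (φ g x : E1) := fun x => (φ g).liftNormal_commutes A x
    have h2 : ((φ g).liftNormal A).symm b = b := by
      rw [AlgEquiv.symm_apply_eq, h1, hb]
    obtain ⟨σ2, hσ2⟩ := hconj _ h2
    refine ⟨(σ2.restrictScalars K).trans ((φ g).liftNormal A), fun x => ?_, ?_⟩
    · have : σ2 (x : A) = x := σ2.commutes ⟨x, hΛ x.2⟩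
      change (φ g).liftNormal A (σ2 x) = _
      rw [this, h1]
    · change (φ g).liftNormal A (σ2 w) = _
      rw [hσ2, AlgEquiv.apply_symm_apply]
  choose τ hτE hτw using key
  set s : Set A := (E1 : Set A) ∪ {w} with hs
  have hLs : ∀ x ∈ E1, x ∈ IntermediateField.adjoin K s := fun x hx => 
    IntermediateField.subset_adjoin K s (Or.inl hx)
  have hws : w ∈ IntermediateField.adjoin K s :=
    IntermediateField.subset_adjoin K s (Or.inr rfl)
  obtain ⟨Φ, hΦ⟩ := hom_builder s τ (by
      rintro g x (hx | hx)
      · have := hτE g ⟨x, hx⟩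
        simp only at this
        rw [this]
        exact hLs _ (φ g ⟨x, hx⟩).2
      · rw [Set.mem_singleton_iff] at hx
        rw [hx, hτw]
        exact hws) (by
      rintro g h x (hx | hx)
      · rw [hτE (g * h) ⟨x, hx⟩, hτE h ⟨x, hx⟩, hτE, map_mul]; rfl
      · rw [Set.mem_singleton_iff] at hx
        rw [hx, hτw, hτw, hτw])
  have hsepA : ∀ x ∈ s, IsSeparable K x := by
    rintro x (hx | hx)
    · have := Algebra.IsSeparable.isSeparable K (⟨x, hx⟩ : E1)
      rw [IsSeparable] at this ⊢
      rwa [← minpoly.algebraMap_eq (algebraMap E1 A).injective] at this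
    · rw [Set.mem_singleton_iff] at hx
      rw [hx]; exact hw
  have hsepE : Algebra.IsSeparable K (IntermediateField.adjoin K s) :=
    (IntermediateField.isSeparable_adjoin_iff_isSeparable K A).2 hsepA
  have hinj : Function.Injective Φ := by
    intro g h hgh
    apply hφ
    ext x
    rw [← hτE, ← hτE, ← hΦ g ⟨x, hLs x x.2⟩, hgh, hΦ]
  have hsur : Function.Surjective Φ := by
    intro σ
    have h1 : ∀ x : IntermediateField.adjoin K s, σ.liftNormal A x = (σ x : IntermediateField.adjoin K s) := 
      fun x => σ.liftNormal_commutes A x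
    obtain ⟨h2, h3⟩ := hsurj (σ.liftNormal A) (fun x hx => by
      rw [h1 ⟨x, hx⟩]; exact (σ ⟨x, hx⟩).2)
    obtain ⟨g, hg⟩ := gal_lemma E1 φ (σ.liftNormal A) (fun x hx => by
      exact agree_adjoin {(b : A)} (σ.liftNormal A : A →ₐ[K] A) (AlgHom.id K A) (by
        intro y hy
        rw [Set.mem_singleton_iff] at hy
        rw [hy]; exact h2) _ (hbF x hx))
    refine ⟨g, ?_⟩
    ext x
    rw [hΦ, ← h1]
    exact agree_adjoin s (τ g : A →ₐ[K] A) (σ.liftNormal A : A →ₐ[K] A) (by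
      rintro y (hy | hy)
      · exact (hτE g ⟨y, hy⟩).trans (hg ⟨y, hy⟩).symm
      · rw [Set.mem_singleton_iff] at hy
        rw [hy]; exact (hτw g).trans h3.symm) x x.2
  refine ⟨IntermediateField.adjoin K s, hLs, ?_, hsepE, ?_, (MulEquiv.ofBijective Φ ⟨hinj, hsur⟩).symm, ?_⟩
  · have h1 : FiniteDimensional K (IntermediateField.adjoin K {w}) := 
      IntermediateField.finiteDimensional_adjoin fun x hx => by
        rw [Set.mem_singleton_iff] at hx
        rw [hx]; exact hw.isIntegral
    have h2 : IntermediateField.adjoin K s = E1 ⊔ IntermediateField.adjoin K {w} := by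
      rw [hs, IntermediateField.adjoin_union, IntermediateField.adjoin_self]
    rw [h2]
    infer_instance
  · intro x hx hxa
    have hxs : IsSeparable K x := by
      have := Algebra.IsSeparable.isSeparable K (⟨x, hx⟩ : IntermediateField.adjoin K s)
      rw [IsSeparable] at this ⊢
      rwa [← minpoly.algebraMap_eq (algebraMap (IntermediateField.adjoin K s) A).injective] at this
    have hN : Normal E1 A := Normal.tower_top_of_normal K E1 A
    have hxL : IsSeparable E1 x := hxs.tower_top E1
    obtain ⟨y, hy⟩ := fixed_mem x hxL (by
      intro σ
      obtain ⟨σ2, h2⟩ := hconj (σ.restrictScalars K) (σ.commutes b)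
      have := agree_adjoin s (σ.restrictScalars K : A →ₐ[K] A) (σ2.restrictScalars K : A →ₐ[K] A) (by
        rintro x (hx | hx)
        · exact (σ.commutes ⟨x, hx⟩).trans (σ2.commutes ⟨x, hΛ hx⟩).symm
        · rw [Set.mem_singleton_iff] at hx
          rw [hx]; exact h2.symm) x hx
      exact this.trans (σ2.commutes ⟨x, halg x hxa⟩))
    rw [← hy]
    exact y.2
  · intro σ x hx
    obtain ⟨g, rfl⟩ := hsur σ
    have : (MulEquiv.ofBijective Φ ⟨hinj, hsur⟩).symm (Φ g) = g := 
      (MulEquiv.symm_apply_eq _).2 rfl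
    rw [this, hΦ]
    exact hτE g ⟨x, hx⟩

noncomputable def gg {R : Type*} [CommRing R] (n : ℕ) (d : R) : R[X] := X ^ n - C d * X - C d

lemma gg_aeval {R S : Type*} [CommRing R] [CommRing S] [Algebra R S] (n : ℕ) (d : R) (x : S) :
    aeval x (gg n d) = x ^ n - algebraMap R S d * x - algebraMap R S d := by
  simp [gg]

lemma gg_coeff {R : Type*} [CommRing R] (n : ℕ) (d : R) (i : ℕ) (hi : i < n) :
    (gg n d).coeff i = - (if i = 1 then d else 0) - (if i = 0 then d else 0) := by
  simp [gg, coeff_X_pow, coeff_C, hi.ne, coeff_X, eq_comm]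

lemma gg_deg {R : Type*} [CommRing R] [Nontrivial R] (n : ℕ) (hn : 2 ≤ n) (d : R) :
    (gg n d).natDegree = n ∧ (gg n d).Monic := by
  have h : (C d * X + C d).degree < (n : WithBot ℕ) := by
    have : (C d * X + C d).natDegree ≤ 1 := by compute_degree
    refine (degree_le_natDegree).trans_lt ?_
    exact_mod_cast (by omega)
  have e : gg n d = X ^ n - (C d * X + C d) := by simp [gg]; ring
  constructor
  · rw [e]
    have h' := degree_sub_eq_left_of_degree_lt (p := (X ^ n : R[X])) (q := C d * X + C d) (by rwa [degree_X_pow])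
    rw [degree_X_pow] at h'
    exact natDegree_eq_of_degree_eq_some h'
  · rw [e]
    exact monic_X_pow_sub h

lemma gg_loc {κ C B : Type*} [Field κ] [Field C] [Field B]
    [Algebra κ⟦X⟧ C] [IsFractionRing κ⟦X⟧ C] [Algebra C B] [Algebra κ⟦X⟧ B] [IsScalarTower κ⟦X⟧ C B]
    (n : ℕ) (hn : 2 ≤ n) (d : κ⟦X⟧) 
    (hd : PowerSeries.constantCoeff d = 0) (hd' : ¬ PowerSeries.X ^ 2 ∣ d) (y : B) 
    (hy : aeval y (gg n d) = 0) : (minpoly C y).natDegree = n := by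
  have h := gg_deg n hn d
  rw [pw_eisenstein (C := C) (gg n d) h.2 (by rw [h.1]; omega) _ _ y hy, h.1]
  · intro i hi
    rw [h.1] at hi
    rw [gg_coeff _ _ _ hi]
    split_ifs <;> simp [hd]
  · rw [gg_coeff _ _ _ (by omega)]
    simpa using hd'

lemma gg_min {k κ K A C B : Type*} [Field k] [Field κ] [Algebra k κ] 
    [Field K] [Field A] [Field C] [Field B]
    [Algebra k[X] K] [IsFractionRing k[X] K] [Algebra K A] [IsAlgClosure K A]
    [Algebra κ⟦X⟧ C] [IsFractionRing κ⟦X⟧ C] [Algebra C B] [Algebra κ⟦X⟧ B] [IsScalarTower κ⟦X⟧ C B]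
    [IsAlgClosure C B] {t : κ} {ι : A →+* B} (h : IsPl k K t ι) (Λ : IntermediateField K A) 
    (hΛ : Λ ≤ pl_field C h) (d : Λ) (n : ℕ) (hn : 2 ≤ n) (dO : κ⟦X⟧) 
    (hd : PowerSeries.constantCoeff dO = 0) (hd' : ¬ PowerSeries.X ^ 2 ∣ dO) 
    (hdO : algebraMap κ⟦X⟧ B dO = ι d) (Z : A) (hZ : aeval Z (gg n d) = 0) : 
    gg n d = minpoly Λ Z ∧ (minpoly Λ Z).Separable := by
  have hg := gg_deg n hn d
  have hint : IsIntegral Λ Z := ⟨gg n d, hg.2, hZ⟩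
  have h1 : gg n d = minpoly Λ Z := by
    refine minpoly_eq_of_deg _ _ hg.2 hZ ?_
    rw [hg.1]
    refine le_trans (le_of_eq ?_) (pl_deg h Λ hΛ Z hint)
    refine (gg_loc n hn dO hd hd' _ ?_).symm
    rw [gg_aeval] at hZ ⊢
    rw [hdO, ← map_pow, ← map_mul, ← map_sub, ← map_sub]
    erw [hZ]
    exact map_zero ι
  refine ⟨h1, ?_⟩
  rw [separable_iff_derivative_ne_zero (minpoly.irreducible hint), ← h1]
  intro h2
  have := congrArg (fun p => coeff p 0) h2
  simp only [coeff_derivative, coeff_zero, zero_add] at this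
  rw [gg_coeff _ _ _ (by omega)] at this
  simp at this
  rw [this] at hdO
  apply hd'
  have : dO = 0 := OB_inj (κ := κ) C (B := B) (by rw [hdO]; simp)
  rw [this]
  exact dvd_zero _

end

section
open Polynomial
open scoped PowerSeries

lemma gg_inv {A : Type*} [Field A] (r : ℕ) (a e w : A) (ha : a ≠ 0) (he : e ≠ 0) 
    (hw : a * (w ^ (r + 1) * (w + 1)) = e ^ (r + 1)) : 
    w ≠ 0 ∧ (w⁻¹) ^ (r + 2) - (a * (e⁻¹) ^ (r + 1)) * w⁻¹ - a * (e⁻¹) ^ (r + 1) = 0 := by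
  have hw0 : w ≠ 0 := by
    rintro rfl
    rw [zero_pow (by omega), zero_mul, mul_zero] at hw
    exact pow_ne_zero _ he hw.symm
  refine ⟨hw0, ?_⟩
  have h1 : (e⁻¹) ^ (r + 1) = (a * (w ^ (r + 1) * (w + 1)))⁻¹ := by rw [hw, inv_pow]
  have hw1 : w + 1 ≠ 0 := by
    intro h
    rw [h, mul_zero, mul_zero] at hw
    exact pow_ne_zero _ he hw.symm
  rw [h1, inv_pow]
  field_simp
  ring

lemma thm2 (k κ K A C B : Type*) [Field k] [Field κ] [Algebra k κ] [IsAlgClosed κ] [Algebra.IsAlgebraic k κ]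
    [Field K] [Field A] [Field C] [Field B]
    [Algebra k[X] K] [IsFractionRing k[X] K] [Algebra K A] [IsAlgClosure K A]
    [Algebra k K] [IsScalarTower k k[X] K] [Algebra k A] [IsScalarTower k K A]
    [Algebra κ⟦X⟧ C] [IsFractionRing κ⟦X⟧ C] [Algebra C B] [Algebra κ⟦X⟧ B] [IsScalarTower κ⟦X⟧ C B]
    [IsAlgClosure C B] (E1 : IntermediateField K A) [FiniteDimensional K E1] [Algebra.IsSeparable K E1] 
    {G : Type*} [Group G] (φ : G →* (E1 ≃ₐ[K] E1)) (hφ : Function.Injective φ) :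
    ∃ (E : IntermediateField K A) (hE : E1 ≤ E), FiniteDimensional K E ∧ Algebra.IsSeparable K E ∧
      (∀ x ∈ E, IsAlgebraic k x → x ∈ E1) ∧ ∃ β : (E ≃ₐ[K] E) ≃* G, 
        ∀ (σ : E ≃ₐ[K] E) x (hx : x ∈ E1), ((σ ⟨x, hE hx⟩ : E) : A) = ((φ (β σ) ⟨x, hx⟩ : E1) : A) := by
  classical
  have : IsAlgClosed B := IsAlgClosure.isAlgClosed C
  have : IsAlgClosed A := IsAlgClosure.isAlgClosed K
  have hAalg : Algebra.IsAlgebraic K A := IsAlgClosure.isAlgebraic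
  have hNA : Normal K A := inferInstance
  have inj := OB_inj (κ := κ) C (B := B)
  obtain ⟨b, Y, a, t0, t1, ι, ι1, h0, h1, hbF, hFb, hE0, hE1, he, ⟨eO, heO, heι⟩, hother, ⟨u1, hu1, hu1ι⟩, 
    ha, hat0, hat1, hat1'⟩ := t2_data k κ K A C B E1 (IntermediateField.lift (IntermediateField.fixedField φ.range)) 
      (IntermediateField.lift_le _)
  have hbE : b ∈ E1 := IntermediateField.lift_le _ hbF
  have hbfix : ∀ g, φ g ⟨b, hbE⟩ = ⟨b, hbE⟩ := by
    intro g
    have : (⟨b, hbE⟩ : E1) ∈ IntermediateField.fixedField φ.range := 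
      (IntermediateField.mem_lift (⟨b, hbE⟩ : E1)).1 hbF
    exact this ⟨φ g, g, rfl⟩
  set y : A := algebraMap K A (algebraMap k[X] K Y) with hy
  set e : A := 1 - y * b with hedef
  set aA : A := algebraMap K A (algebraMap k[X] K a) with haA
  have haA0 : aA ≠ 0 := by
    rw [haA, Ne, map_eq_zero, map_eq_zero_iff _ (IsFractionRing.injective k[X] K)]; exact ha
  have haO : pl_phi k t0 a ≠ 0 := by
    rw [Ne, map_eq_zero_iff _ (pl_phi_inj t0)]; exact ha
  have heO0 : eO ≠ 0 := by
    rintro rfl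
    rw [map_zero] at heι
    exact he ((map_eq_zero ι).1 heι.symm)
  obtain ⟨r, hr, hra, hra'⟩ := ps_order _ haO (by rw [pl_phi_ev, hat0])
  obtain ⟨V, hV, hVu⟩ := pw_oneroot (C := C) (pl_phi k t0 a) eO r hr hra hra' heO heO0
  have cB : ∀ x : κ⟦X⟧, algebraMap C B (algebraMap κ⟦X⟧ C x) = algebraMap κ⟦X⟧ B x := fun x => 
    (IsScalarTower.algebraMap_apply κ⟦X⟧ C B x).symm
  -- transfer of the equation to C
  have toC : ∀ (w' e' : A) (V' : C) (e'O : κ⟦X⟧), algebraMap C B V' = ι w' → algebraMap κ⟦X⟧ B e'O = ι e' → 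
      aA * (w' ^ (r + 1) * (w' + 1)) = e' ^ (r + 1) → 
      algebraMap κ⟦X⟧ C (pl_phi k t0 a) * (V' ^ (r + 1) * (V' + 1)) = algebraMap κ⟦X⟧ C (e'O ^ (r + 1)) := by
    intro w' e' V' e'O hV' he' hw'
    apply (algebraMap C B).injective
    have := congrArg ι hw'
    rw [map_mul, map_mul, map_pow, map_pow, map_add, map_one, ← hV', ← he', haA, h0] at this
    rw [map_mul, map_mul, map_pow, map_add, map_one, cB, cB, map_pow, this]
  obtain ⟨w, hwe, hwV⟩ : ∃ w : A, aA * (w ^ (r + 1) * (w + 1)) = e ^ (r + 1) ∧ ι w = algebraMap C B V := by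
    set p : A[X] := Polynomial.C aA * (X ^ (r + 1) * (X + 1)) - Polynomial.C (e ^ (r + 1)) with hp
    have hpne : p ≠ 0 := by
      intro h
      have := congrArg (eval 0) h
      simp [hp] at this
      exact he this
    have hs : p.Splits := IsAlgClosed.splits _
    obtain ⟨w, hw⟩ := hs.mem_range_of_isRoot hpne (i := ι) (x := algebraMap C B V) (by
      have := congrArg (algebraMap C B) hV
      rw [map_mul, map_mul, map_pow, map_add, map_one, cB, cB, map_pow, heι, ← h0] at this
      simp only [hp, IsRoot, eval_map, eval₂_sub, eval₂_mul, eval₂_C, eval₂_pow, eval₂_X, eval₂_add, eval₂_one]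
      rw [this, map_pow, sub_self])
    refine ⟨w, ι.injective ?_, hw⟩
    have := congrArg (algebraMap C B) hV
    rw [map_mul, map_mul, map_pow, map_add, map_one, cB, cB, map_pow, heι, ← h0] at this
    rw [map_mul, map_mul, map_pow, map_pow, map_add, map_one, hw]
    exact this
  -- global facts
  have hσK : ∀ σ : A ≃ₐ[K] A, ∀ w', aA * (w' ^ (r + 1) * (w' + 1)) = e ^ (r + 1) → 
      aA * ((σ w') ^ (r + 1) * ((σ w') + 1)) = (1 - y * σ b) ^ (r + 1) := by
    intro σ w' hw'
    have := congrArg σ hw'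
    rw [map_mul, map_mul, map_pow, map_pow, map_add, map_one, hedef, map_sub, map_mul, map_one, haA, hy, 
      AlgEquiv.commutes, AlgEquiv.commutes] at this
    exact this
  have hbt : aA * (e⁻¹) ^ (r + 1) ∈ E1 := by
    have hK : ∀ x : K, algebraMap K A x ∈ E1 := fun x => E1.algebraMap_mem x
    exact mul_mem (hK _) (pow_mem (inv_mem (sub_mem (one_mem _) (mul_mem (hK _) hbE))) _)
  set bt : A := aA * (e⁻¹) ^ (r + 1) with hbtdef
  have hu1O : u1 * u1⁻¹ = 1 := PowerSeries.mul_inv_cancel u1 hu1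
  set dO : κ⟦X⟧ := pl_phi k t1 a * (u1⁻¹) ^ (r + 1) with hdOdef
  have hdO1 : PowerSeries.constantCoeff dO = 0 := by
    rw [hdOdef, map_mul, pl_phi_ev, hat1, zero_mul]
  have hdO2 : ¬ PowerSeries.X ^ 2 ∣ dO := by
    intro h
    apply pl_phi_simple t1 a hat1'
    have : pl_phi k t1 a = dO * u1 ^ (r + 1) := by
      rw [hdOdef, mul_assoc, ← mul_pow, mul_comm u1⁻¹, hu1O, one_pow, mul_one]
    rw [this]
    exact h.mul_right _
  have hdO3 : algebraMap κ⟦X⟧ B dO = ι1 bt := by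
    have : algebraMap κ⟦X⟧ B u1⁻¹ = (ι1 e)⁻¹ := by
      apply eq_inv_of_mul_eq_one_right
      rw [← hu1ι, ← map_mul, hu1O, map_one]
    rw [hdOdef, hbtdef, map_mul, map_pow, this, map_mul, map_pow, map_inv₀, haA, h1]
  have hmin : ∀ (Λ : IntermediateField K A) (hΛ : Λ ≤ pl_field C h1) (hd : bt ∈ Λ) (w' : A), 
      aA * (w' ^ (r + 1) * (w' + 1)) = e ^ (r + 1) → 
      gg (r + 2) (⟨bt, hd⟩ : Λ) = minpoly Λ w'⁻¹ ∧ (minpoly Λ w'⁻¹).Separable := by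
    intro Λ hΛ hd w' hw'
    refine gg_min h1 Λ hΛ ⟨bt, hd⟩ (r + 2) (by omega) dO hdO1 hdO2 hdO3 _ ?_
    rw [gg_aeval]
    exact (gg_inv r aA e w' haA0 he hw').2
  have halg : ∀ x : A, IsAlgebraic k x → x ∈ pl_field C h1 := fun x hx => pl_alg h1 x hx
  have hwsep : IsSeparable K w := by
    have h2 : IsSeparable E1 w⁻¹ := (hmin E1 hE1 hbt w hwe).2
    have h3 : IsSeparable K w⁻¹ := IsSeparable.of_algebra_isSeparable_of_isSeparable K h2
    have h4 : Algebra.IsSeparable K (IntermediateField.adjoin K {w⁻¹}) := 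
      (IntermediateField.isSeparable_adjoin_iff_isSeparable K A).2 (by
        intro x hx
        rw [Set.mem_singleton_iff] at hx
        rw [hx]; exact h3)
    have h5 : w ∈ IntermediateField.adjoin K {w⁻¹} := by
      have := inv_mem (IntermediateField.mem_adjoin_simple_self K w⁻¹)
      rwa [inv_inv] at this
    have := Algebra.IsSeparable.isSeparable K (⟨w, h5⟩ : IntermediateField.adjoin K {w⁻¹})
    rw [IsSeparable] at this ⊢
    rwa [← minpoly.algebraMap_eq (algebraMap (IntermediateField.adjoin K {w⁻¹}) A).injective] at this
  refine thm2_abs (k := k) E1 φ hφ (pl_field C h1) hE1 halg ⟨b, hbE⟩ hbfix ?_ w hwsep ?_ ?_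
  · intro x hx
    apply hFb
    rw [IntermediateField.mem_lift]
    rintro ⟨_, g, rfl⟩
    exact hx g
  · intro σ hσ
    have hσ' : σ b = b := hσ
    have h2 := hσK σ w hwe
    rw [hσ'] at h2
    have h3 := (hmin _ le_rfl (hE1 hbt) w hwe).1
    have h4 := (hmin _ le_rfl (hE1 hbt) (σ w) h2).1
    have hN : Normal (pl_field C h1) A := Normal.tower_top_of_normal K (pl_field C h1) A
    obtain ⟨σ2, hσ2⟩ := isConjRoot_iff_exists_algEquiv.1 
      (isConjRoot_def.2 (h4.symm.trans h3) : IsConjRoot (pl_field C h1) (σ w)⁻¹ w⁻¹)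
    refine ⟨σ2, ?_⟩
    rw [map_inv₀] at hσ2
    exact inv_injective hσ2
  · intro σ hσ
    have hwpl : w ∈ pl_field C h0 := (mem_pl_field h0 w).2 ⟨V, hwV.symm⟩
    have hEpl : IntermediateField.adjoin K ((E1 : Set A) ∪ {w}) ≤ pl_field C h0 := by
      rw [IntermediateField.adjoin_le_iff]
      rintro x (hx | hx)
      · exact hE0 hx
      · rw [Set.mem_singleton_iff] at hx
        rw [hx]; exact hwpl
    obtain ⟨V', hV'⟩ := (mem_pl_field h0 _).1 (hEpl (hσ w (IntermediateField.subset_adjoin K _ (Or.inr rfl))))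
    have h2 := hσK σ w hwe
    have hb : σ b = b := by
      by_contra hne
      obtain ⟨u, hu, huι⟩ := hother (σ b) (aeval_equiv_zero b _ σ (minpoly.aeval _ _)) hne
      refine pw_noroot (C := C) (pl_phi k t0 a) (u ^ (r + 1)) (r + 1) (by rw [pl_phi_ev, hat0]) ?_ ?_ V' 
        (toC _ _ V' u hV' huι h2)
      · intro h
        exact hra' ((pow_dvd_pow _ (by omega)).trans h)
      · rw [map_pow]; exact pow_ne_zero _ hu
    refine ⟨hb, ?_⟩
    rw [hb] at h2
    have := hVu V' (toC _ _ V' eO hV' heι h2)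
    apply ι.injective
    rw [← hV', this, hwV]

end

section
open Polynomial
open scoped PowerSeries
lemma final_aux (k : Type) [Field k] (G : Type) [Group G] [Finite G]
    (L : IntermediateField (RatFunc k) (AlgebraicClosure (RatFunc k)))
    [FiniteDimensional (RatFunc k) L] [Algebra.IsSeparable (RatFunc k) L]
    (α : G →* (L ≃ₐ[RatFunc k] L)) :
    ∃ (E : IntermediateField (RatFunc k) (AlgebraicClosure (RatFunc k)))
      (hLE : L ≤ E),
      FiniteDimensional (RatFunc k) E ∧ Algebra.IsSeparable (RatFunc k) E ∧
      (∀ x : AlgebraicClosure (RatFunc k), x ∈ E → IsAlgebraic k x → x ∈ L) ∧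
      ∃ β : (E ≃ₐ[RatFunc k] E) ≃* G,
        ∀ (σ : E ≃ₐ[RatFunc k] E) (x : AlgebraicClosure (RatFunc k)) (hx : x ∈ L),
          ((σ ⟨x, hLE hx⟩ : E) : AlgebraicClosure (RatFunc k)) =
            ((α (β σ) ⟨x, hx⟩ : L) : AlgebraicClosure (RatFunc k)) := by
  obtain ⟨E1, hLE, hf, hs, hreg, φ, hφ, hφα⟩ := thm1 (k := k) L α 
    (thm1_core k (AlgebraicClosure k) (RatFunc k) (AlgebraicClosure (RatFunc k)) 
      (LaurentSeries (AlgebraicClosure k)) (AlgebraicClosure (LaurentSeries (AlgebraicClosure k))) L (Nat.card G))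
  obtain ⟨E, hE, hf2, hs2, hreg2, β, hβ⟩ := thm2 k (AlgebraicClosure k) (RatFunc k) (AlgebraicClosure (RatFunc k)) 
      (LaurentSeries (AlgebraicClosure k)) (AlgebraicClosure (LaurentSeries (AlgebraicClosure k))) E1 φ hφ
  refine ⟨E, hLE.trans hE, hf2, hs2, fun x hx ha => hreg x (hreg2 x hx ha) ha, β, fun σ x hx => ?_⟩
  rw [← hφα]
  exact hβ σ x (hLE hx)
end

/-- **Every finite embedding problem over k(T) has a regular solution.**
Here `L` is a finite separable extension of `k(T) = RatFunc k` inside a fixed algebraic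
closure, `α : G → Aut(L/k(T))` is surjective, and we find a finite separable extension
`E/k(T)` with `L ⊆ E`, such that every element of `E` algebraic over `k` lies in `L`
(regularity: `E ∩ k̄ = L ∩ k̄`), together with an isomorphism
`β : Aut(E/k(T)) ≃ G` so that every `σ ∈ Aut(E/k(T))` maps `L` onto itself and
`σ|_L = α (β σ)`. -/
theorem statement_0 (k : Type) [Field k] (G : Type) [Group G] [Finite G]
    (L : IntermediateField (RatFunc k) (AlgebraicClosure (RatFunc k)))
    [FiniteDimensional (RatFunc k) L] [Algebra.IsSeparable (RatFunc k) L]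
    (α : G →* (L ≃ₐ[RatFunc k] L)) (hα : Function.Surjective α) :
    ∃ (E : IntermediateField (RatFunc k) (AlgebraicClosure (RatFunc k)))
      (hLE : L ≤ E),
      FiniteDimensional (RatFunc k) E ∧ Algebra.IsSeparable (RatFunc k) E ∧
      (∀ x : AlgebraicClosure (RatFunc k), x ∈ E → IsAlgebraic k x → x ∈ L) ∧
      ∃ β : (E ≃ₐ[RatFunc k] E) ≃* G,
        ∀ (σ : E ≃ₐ[RatFunc k] E) (x : AlgebraicClosure (RatFunc k)) (hx : x ∈ L),
          ((σ ⟨x, hLE hx⟩ : E) : AlgebraicClosure (RatFunc k)) =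
            ((α (β σ) ⟨x, hx⟩ : L) : AlgebraicClosure (RatFunc k)) := by
  exact final_aux k G L α
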